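/- arXiv:math/0104238 — 3 statements merged into one kernel-verified Lean document; each statement's English description precedes it below -/
import Mathlib

section
/- There exist constants c₁, c₂ > 0 with the following property: for every integer n ≥ 1, every bivariate polynomial P ∈ ℂ[z,w] of total degree at most n, every z₀ ∈ ℂ, and all radii 0 < R₁ ≤ R₂, writing f(z) = P(z, e^z) and M(R) = max_{|z−z₀|≤R} |f(z)|, one has M(R₂) ≤ M(R₁) · e^{c₁ R₂ n} · (R₂/R₁)^{c₂ n²}. -/
/-!
Let `D` be differentiation and suppose that an entire function `f` is killed by
`∏_{a ∈ s} (D - a)`, a product of `N` factors with all `‖a‖ ≤ Λ`. Cauchy's estimates on the small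
disk bound the first `N` Taylor coefficients of `f` at the centre, and the linear recurrence with
characteristic roots `s` propagates this to all of them. Summing the Taylor series gives
`M(R₂) ≤ M(R₁) (R₂ / R₁) ^ N e ^ (2 Λ R₂ + N)`. Hadamard's three circles theorem on the radii
`R₁ ≤ R₂ ≤ e R₂` absorbs the factor `e ^ N`, at the cost of doubling the exponent `N`. Finally,
`P(z, e^z)` is killed by `∏_{b ≤ d} (D - b) ^ (m + 1)` if `P` has degree at most `m` in `z` and at
most `d` in `w`.
-/

open Complex Metric Set

section OperatorWithRoots

open Polynomial

variable {R V : Type*} [CommRing R] [AddCommGroup V] [Module R V]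

/-- The operator `∏_{a ∈ s} (T - a)`. For `T` differentiation these are the constant coefficient
differential operators with characteristic roots `s`, whose kernels consist of exponential
polynomials. -/
noncomputable def operatorWithRoots (T : Module.End R V) (s : Multiset R) : Module.End R V :=
  aeval T (s.map fun a => X - C a).prod

lemma operatorWithRoots_zero_apply (T : Module.End R V) (v : V) : operatorWithRoots T 0 v = v := by
  simp [operatorWithRoots]

lemma operatorWithRoots_cons_apply (T : Module.End R V) (a : R) (s : Multiset R) (v : V) :
    operatorWithRoots T (a ::ₘ s) v =
      T (operatorWithRoots T s v) - a • operatorWithRoots T s v := by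
  simp [operatorWithRoots]

lemma operatorWithRoots_add_apply (T : Module.End R V) (s t : Multiset R) (v : V) :
    operatorWithRoots T (s + t) v = operatorWithRoots T s (operatorWithRoots T t v) := by
  simp [operatorWithRoots]

lemma operatorWithRoots_cons_apply' (T : Module.End R V) (a : R) (s : Multiset R) (v : V) :
    operatorWithRoots T (a ::ₘ s) v = operatorWithRoots T s (T v - a • v) := by
  rw [← Multiset.singleton_add, add_comm, operatorWithRoots_add_apply]
  simp [operatorWithRoots]

lemma operatorWithRoots_apply_eq_zero_of_le {T : Module.End R V} {s t : Multiset R} {v : V}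
    (hst : s ≤ t) (hv : operatorWithRoots T s v = 0) : operatorWithRoots T t v = 0 := by
  obtain ⟨u, rfl⟩ := Multiset.le_iff_exists_add.mp hst
  rw [add_comm, operatorWithRoots_add_apply, hv, map_zero]

end OperatorWithRoots

section LinearRecurrence

variable {𝕜 V E : Type*} [NormedField 𝕜] [AddCommGroup V] [Module 𝕜 V]
  [SeminormedAddCommGroup E] [NormedSpace 𝕜 E] {T : Module.End 𝕜 V} {ℓ : V →ₗ[𝕜] E}
  {A Λ : ℝ} {s : Multiset 𝕜} {v : V}

lemma norm_pow_operatorWithRoots_apply_le {ρ : ℝ} {N : ℕ}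
    (hv : ∀ j ≤ N, ‖ℓ ((T ^ j) v)‖ ≤ A * ρ ^ j) (hs : ∀ a ∈ s, ‖a‖ ≤ Λ) (j : ℕ)
    (hj : j + s.card ≤ N) :
    ‖ℓ ((T ^ j) (operatorWithRoots T s v))‖ ≤ A * ρ ^ j * (ρ + Λ) ^ s.card := by
  induction s using Multiset.induction_on generalizing j with
  | empty => simpa [operatorWithRoots_zero_apply] using hv j (by simpa using hj)
  | cons a s ih =>
    rw [Multiset.card_cons] at hj ⊢
    replace ih := ih fun b hb => hs b (Multiset.mem_cons_of_mem hb)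
    have ha : ‖a‖ ≤ Λ := hs a (Multiset.mem_cons_self a s)
    set w := operatorWithRoots T s v
    calc ‖ℓ ((T ^ j) (operatorWithRoots T (a ::ₘ s) v))‖
        = ‖ℓ ((T ^ (j + 1)) w) - a • ℓ ((T ^ j) w)‖ := by
          simp only [operatorWithRoots_cons_apply, map_sub, map_smul, pow_succ,
            Module.End.mul_apply, w]
      _ ≤ ‖ℓ ((T ^ (j + 1)) w)‖ + ‖a‖ * ‖ℓ ((T ^ j) w)‖ := by
          grw [norm_sub_le, norm_smul]
      _ ≤ A * ρ ^ (j + 1) * (ρ + Λ) ^ s.card + Λ * (A * ρ ^ j * (ρ + Λ) ^ s.card) :=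
          add_le_add (ih (j + 1) (by lia))
            (mul_le_mul ha (ih j (by lia)) (norm_nonneg _) ((norm_nonneg a).trans ha))
      _ = A * ρ ^ j * (ρ + Λ) ^ (s.card + 1) := by ring

/-- Taking `x` large buys a slower geometric growth in `j` at the price of the fixed factor
`x ^ card s`; the application has `x = R₂ / R₁`. -/
lemma norm_pow_apply_le_of_operatorWithRoots_apply_eq_zero {Q x : ℝ} (hQ : 0 ≤ Q) (hΛ : 0 ≤ Λ)
    (hx : 1 ≤ x) (hs : ∀ a ∈ s, ‖a‖ ≤ Λ) (hv : operatorWithRoots T s v = 0)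
    (hA : ∀ t ≤ s, ‖ℓ (operatorWithRoots T t v)‖ ≤ A * Q ^ t.card) (j : ℕ) :
    ‖ℓ ((T ^ j) v)‖ ≤ A * x ^ s.card * (Λ + Q / x) ^ j := by
  induction s using Multiset.induction_on generalizing v A j with
  | empty =>
    have hA0 : 0 ≤ A := by simpa using (norm_nonneg _).trans (hA 0 le_rfl)
    obtain rfl : v = 0 := by rwa [operatorWithRoots_zero_apply] at hv
    simp only [map_zero, norm_zero]
    positivity
  | cons a s ih =>
    have ha : ‖a‖ ≤ Λ := hs a (Multiset.mem_cons_self a s)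
    have hvA : ‖ℓ v‖ ≤ A := by
      simpa [operatorWithRoots_zero_apply] using hA 0 (Multiset.zero_le _)
    have hA0 : 0 ≤ A := (norm_nonneg _).trans hvA
    have hAw : ∀ t ≤ s, ‖ℓ (operatorWithRoots T t (T v - a • v))‖ ≤ A * Q * Q ^ t.card := by
      intro t ht
      simpa [operatorWithRoots_cons_apply', pow_succ', mul_assoc] using
        hA (a ::ₘ t) (Multiset.cons_le_cons a ht)
    have hw : ∀ j, ‖ℓ ((T ^ j) (T v - a • v))‖ ≤ A * Q * x ^ s.card * (Λ + Q / x) ^ j :=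
      fun j => ih (fun b hb => hs b (Multiset.mem_cons_of_mem hb))
        (by rwa [← operatorWithRoots_cons_apply']) hAw j
    rw [Multiset.card_cons]
    induction j with
    | zero => simpa using hvA.trans (le_mul_of_one_le_right hA0 (one_le_pow₀ hx))
    | succ j ihj =>
      calc ‖ℓ ((T ^ (j + 1)) v)‖ = ‖a • ℓ ((T ^ j) v) + ℓ ((T ^ j) (T v - a • v))‖ := by
            simp only [map_sub, map_smul, pow_succ, Module.End.mul_apply, add_sub_cancel]
        _ ≤ ‖a‖ * ‖ℓ ((T ^ j) v)‖ + ‖ℓ ((T ^ j) (T v - a • v))‖ := by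
            grw [norm_add_le, norm_smul]
        _ ≤ Λ * (A * x ^ (s.card + 1) * (Λ + Q / x) ^ j)
              + A * Q * x ^ s.card * (Λ + Q / x) ^ j := by
            gcongr
            exact hw j
        _ = A * x ^ (s.card + 1) * (Λ + Q / x) ^ (j + 1) := by
            have hx0 : x ≠ 0 := (one_pos.trans_le hx).ne'
            generalize hκ : Λ + Q / x = κ
            have hQx : Λ * x + Q = κ * x := by rw [← hκ]; field_simp
            linear_combination A * x ^ s.card * κ ^ j * hQx

theorem norm_pow_apply_le_of_linear_recurrence {ρ x : ℝ} (hρ : 0 ≤ ρ) (hΛ : 0 ≤ Λ) (hx : 1 ≤ x)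
    (hs : ∀ a ∈ s, ‖a‖ ≤ Λ) (hv : operatorWithRoots T s v = 0)
    (hA : ∀ j ≤ s.card, ‖ℓ ((T ^ j) v)‖ ≤ A * ρ ^ j) (j : ℕ) :
    ‖ℓ ((T ^ j) v)‖ ≤ A * x ^ s.card * (Λ + (ρ + Λ) / x) ^ j := by
  refine norm_pow_apply_le_of_operatorWithRoots_apply_eq_zero (by positivity) hΛ hx hs hv ?_ j
  intro t ht
  simpa using norm_pow_operatorWithRoots_apply_le hA (fun a ha => hs a (Multiset.mem_of_le ht ha)) 0
    (by simpa using Multiset.card_le_card ht)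

end LinearRecurrence

section EntireFunctions

lemma nonneg_of_forall_mem_sphere_norm_le {F E : Type*} [NormedAddCommGroup F] [NormedSpace ℝ F]
    [Nontrivial F] [SeminormedAddCommGroup E] {f : F → E} {c : F} {A R : ℝ} (hR : 0 ≤ R)
    (hA : ∀ z ∈ sphere c R, ‖f z‖ ≤ A) : 0 ≤ A := by
  obtain ⟨w, hw⟩ := NormedSpace.sphere_nonempty (x := c).mpr hR
  exact (norm_nonneg _).trans (hA w hw)

variable (E : Type*) [NormedAddCommGroup E] [NormedSpace ℂ E]

/-- The space of entire functions, as a submodule of all functions so that polynomials in the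
differentiation operator can act on it. -/
def entireFunctions : Submodule ℂ (ℂ → E) where
  carrier := {f | Differentiable ℂ f}
  add_mem' := Differentiable.add
  zero_mem' := differentiable_const 0
  smul_mem' c _ hf := hf.const_smul c

variable [CompleteSpace E]

/-- Differentiation as an endomorphism of the space of entire functions. -/
noncomputable def entireDeriv : Module.End ℂ (entireFunctions E) where
  toFun f := ⟨deriv f, Differentiable.deriv f.2⟩
  map_add' f g := Subtype.ext <| funext fun z => deriv_add (f.2 z) (g.2 z)
  map_smul' c f := Subtype.ext <| funext fun z => deriv_const_smul c (f.2 z)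

variable {E}

lemma coe_entireDeriv_pow_apply (j : ℕ) (f : entireFunctions E) :
    ((entireDeriv E ^ j) f : ℂ → E) = iteratedDeriv j f := by
  induction j with
  | zero => simp
  | succ j ih => rw [pow_succ', Module.End.mul_apply, iteratedDeriv_succ, ← ih]; rfl

lemma norm_iteratedDeriv_le_of_operatorWithRoots_eq_zero {f : entireFunctions E} {s : Multiset ℂ}
    {Λ A R x : ℝ} {z₀ : ℂ} (hΛ : 0 ≤ Λ) (hs : ∀ a ∈ s, ‖a‖ ≤ Λ)
    (hf : operatorWithRoots (entireDeriv E) s f = 0) (hR : 0 < R) (hx : 1 ≤ x)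
    (hA : ∀ z ∈ sphere z₀ R, ‖(f : ℂ → E) z‖ ≤ A) (j : ℕ) :
    ‖iteratedDeriv j (f : ℂ → E) z₀‖ ≤ A * x ^ s.card * (Λ + (s.card / R + Λ) / x) ^ j := by
  let ℓ : entireFunctions E →ₗ[ℂ] E := (LinearMap.proj z₀).comp (entireFunctions E).subtype
  have hℓ (j : ℕ) : ℓ ((entireDeriv E ^ j) f) = iteratedDeriv j (f : ℂ → E) z₀ :=
    congrFun (coe_entireDeriv_pow_apply j f) z₀
  have hA0 : 0 ≤ A := nonneg_of_forall_mem_sphere_norm_le hR.le hA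
  have hcauchy : ∀ j ≤ s.card, ‖ℓ ((entireDeriv E ^ j) f)‖ ≤ A * (s.card / R) ^ j := by
    intro j hj
    rw [hℓ]
    calc ‖iteratedDeriv j (f : ℂ → E) z₀‖ ≤ j.factorial * A / R ^ j :=
          norm_iteratedDeriv_le_of_forall_mem_sphere_norm_le j hR f.2.diffContOnCl hA
      _ ≤ s.card ^ j * A / R ^ j := by
          gcongr
          exact_mod_cast j.factorial_le_pow.trans (Nat.pow_le_pow_left hj j)
      _ = A * (s.card / R) ^ j := by rw [div_pow]; ring
  rw [← hℓ]
  exact norm_pow_apply_le_of_linear_recurrence (by positivity) hΛ hx hs hf hcauchy j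

lemma norm_le_mul_exp_of_norm_iteratedDeriv_le {f : ℂ → E}
    (hf : Differentiable ℂ f) {B κ : ℝ} {z₀ : ℂ}
    (h : ∀ j, ‖iteratedDeriv j f z₀‖ ≤ B * κ ^ j) (z : ℂ) :
    ‖f z‖ ≤ B * Real.exp (κ * ‖z - z₀‖) := by
  have hexp := (NormedSpace.expSeries_div_hasSum_exp (κ * ‖z - z₀‖)).mul_left B
  rw [← Real.exp_eq_exp_ℝ] at hexp
  rw [← taylorSeries_eq_of_entire hf z₀ z]
  refine tsum_of_norm_bounded hexp fun j => ?_
  calc ‖(j.factorial : ℂ)⁻¹ • (z - z₀) ^ j • iteratedDeriv j f z₀‖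
      = ‖iteratedDeriv j f z₀‖ * (‖z - z₀‖ ^ j / j.factorial) := by
        rw [norm_smul, norm_smul, norm_inv, norm_natCast, norm_pow]
        ring
    _ ≤ B * κ ^ j * (‖z - z₀‖ ^ j / j.factorial) := by gcongr; exact h j
    _ = B * ((κ * ‖z - z₀‖) ^ j / j.factorial) := by ring

lemma norm_le_of_operatorWithRoots_eq_zero_of_mem_sphere {f : entireFunctions E} {s : Multiset ℂ}
    {Λ A R₁ R₂ : ℝ} {z₀ z : ℂ} (hΛ : 0 ≤ Λ) (hs : ∀ a ∈ s, ‖a‖ ≤ Λ)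
    (hf : operatorWithRoots (entireDeriv E) s f = 0) (hR₁ : 0 < R₁) (hR : R₁ ≤ R₂)
    (hA : ∀ w ∈ sphere z₀ R₁, ‖(f : ℂ → E) w‖ ≤ A) (hz : z ∈ sphere z₀ R₂) :
    ‖(f : ℂ → E) z‖ ≤ A * ((R₂ / R₁) ^ s.card * Real.exp (2 * Λ * R₂ + s.card)) := by
  have hA0 : 0 ≤ A := nonneg_of_forall_mem_sphere_norm_le hR₁.le hA
  have hR₂ : 0 < R₂ := hR₁.trans_le hR
  have hder := norm_iteratedDeriv_le_of_operatorWithRoots_eq_zero hΛ hs hf hR₁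
    ((one_le_div hR₁).mpr hR) hA
  calc _ ≤ _ := norm_le_mul_exp_of_norm_iteratedDeriv_le f.2 hder z
    _ = A * ((R₂ / R₁) ^ s.card * Real.exp (Λ * R₂ + s.card + Λ * R₁)) := by
        rw [mem_sphere_iff_norm.mp hz, mul_assoc]
        congr 3
        field_simp
        ring
    _ ≤ A * ((R₂ / R₁) ^ s.card * Real.exp (2 * Λ * R₂ + s.card)) := by
        gcongr ?_ * (?_ * Real.exp ?_)
        linarith [mul_le_mul_of_nonneg_left hR hΛ]

end EntireFunctions

section ThreeCircles

open HadamardThreeLines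

variable {E : Type*} [NormedAddCommGroup E] [NormedSpace ℂ E]

/-- **Hadamard's three circles theorem**, the three lines theorem for `s ↦ f (z₀ + exp s)`. -/
theorem norm_le_interp_of_mem_annulus {f : ℂ → E} {z₀ z : ℂ} {a b R₁ R₂ : ℝ} (hR₁ : 0 < R₁)
    (hR : R₁ < R₂) (hf : DiffContOnCl ℂ f (ball z₀ R₂ \ closedBall z₀ R₁))
    (ha : ∀ w ∈ sphere z₀ R₁, ‖f w‖ ≤ a) (hb : ∀ w ∈ sphere z₀ R₂, ‖f w‖ ≤ b)
    (hz₁ : R₁ ≤ ‖z - z₀‖) (hz₂ : ‖z - z₀‖ ≤ R₂) :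
    ‖f z‖ ≤ a ^ (1 - Real.log (‖z - z₀‖ / R₁) / Real.log (R₂ / R₁)) *
      b ^ (Real.log (‖z - z₀‖ / R₁) / Real.log (R₂ / R₁)) := by
  have hR₂ : 0 < R₂ := hR₁.trans hR
  have hr : 0 < ‖z - z₀‖ := hR₁.trans_le hz₁
  let g : ℂ → ℂ := fun s => z₀ + exp s
  have hg : Differentiable ℂ g := by fun_prop
  have hg_norm (s : ℂ) : ‖g s - z₀‖ = Real.exp s.re := by simp [g, norm_exp]
  have hg_maps : MapsTo g (verticalStrip (Real.log R₁) (Real.log R₂))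
      (ball z₀ R₂ \ closedBall z₀ R₁) := fun s hs => by
    rw [mem_sdiff, mem_ball_iff_norm, mem_closedBall_iff_norm, hg_norm, not_le,
      ← Real.lt_log_iff_exp_lt hR₂, ← Real.log_lt_iff_lt_exp hR₁]
    exact hs.symm
  have hg_sphere {R : ℝ} (hR : 0 < R) : ∀ s ∈ re ⁻¹' {Real.log R}, g s ∈ sphere z₀ R :=
    fun s (hs : s.re = Real.log R) => by rw [mem_sphere_iff_norm, hg_norm, hs, Real.exp_log hR]
  have hbdd : BddAbove ((norm ∘ f ∘ g) '' verticalClosedStrip (Real.log R₁) (Real.log R₂)) := by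
    have hcompact : IsCompact (closure (ball z₀ R₂ \ closedBall z₀ R₁)) :=
      (isBounded_ball.subset sdiff_subset).isCompact_closure
    have hmaps := hg_maps.closure hg.continuous
    rw [verticalStrip, closure_preimage_re,
      closure_Ioo (Real.log_lt_log hR₁ hR).ne] at hmaps
    refine (hcompact.bddAbove_image hf.continuousOn.norm).mono ?_
    rintro _ ⟨s, hs, rfl⟩
    exact ⟨g s, hmaps hs, rfl⟩
  have hlog : log (z - z₀) ∈ verticalClosedStrip (Real.log R₁) (Real.log R₂) := by
    rw [verticalClosedStrip, mem_preimage, log_re]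
    exact ⟨Real.log_le_log hR₁ hz₁, Real.log_le_log hr hz₂⟩
  have hgz : g (log (z - z₀)) = z := by simp [g, exp_log (norm_pos_iff.mp hr)]
  have key := norm_le_interp_of_mem_verticalClosedStrip' (Real.log_lt_log hR₁ hR) hlog
    (hf.comp hg.diffContOnCl hg_maps) hbdd (fun s hs => ha _ (hg_sphere hR₁ s hs))
    (fun s hs => hb _ (hg_sphere hR₂ s hs))
  rwa [Function.comp_apply, hgz, log_re, ← Real.log_div hr.ne' hR₁.ne',
    ← Real.log_div hR₂.ne' hR₁.ne'] at key

end ThreeCircles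

section Growth

lemma rpow_log_div_log_exp_mul_le {x b : ℝ} (hx : 1 ≤ x) (hb : 0 ≤ b) (N : ℕ) :
    ((Real.exp 1 * x) ^ N * Real.exp (b + N)) ^ (Real.log x / Real.log (Real.exp 1 * x)) ≤
      Real.exp b * x ^ (2 * N) := by
  have hx0 : 0 < x := one_pos.trans_le hx
  set L := Real.log x
  have hL : 0 ≤ L := Real.log_nonneg hx
  have hxL : x = Real.exp L := (Real.exp_log hx0).symm
  have hlog : Real.log (Real.exp 1 * x) = 1 + L := by
    rw [Real.log_mul (Real.exp_ne_zero 1) hx0.ne', Real.log_exp]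
  rw [hlog, hxL, ← Real.exp_add, ← Real.exp_nat_mul, ← Real.exp_nat_mul, ← Real.exp_add,
    ← Real.exp_add, ← Real.exp_mul]
  gcongr
  rw [← mul_div_assoc, div_le_iff₀ (by positivity)]
  push_cast
  have : 0 ≤ N * L ^ 2 := by positivity
  nlinarith

variable {E : Type*} [NormedAddCommGroup E] [NormedSpace ℂ E] [CompleteSpace E]
  {f : entireFunctions E} {s : Multiset ℂ} {Λ R₁ R₂ : ℝ} {z₀ : ℂ}

theorem norm_le_of_operatorWithRoots_eq_zero_of_mem_closedBall {A : ℝ} {z : ℂ} (hΛ : 0 ≤ Λ)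
    (hs : ∀ a ∈ s, ‖a‖ ≤ Λ) (hf : operatorWithRoots (entireDeriv E) s f = 0) (hR₁ : 0 < R₁)
    (hR : R₁ ≤ R₂) (hA : ∀ w ∈ sphere z₀ R₁, ‖(f : ℂ → E) w‖ ≤ A) (hz : z ∈ closedBall z₀ R₂) :
    ‖(f : ℂ → E) z‖ ≤ A * Real.exp (2 * Real.exp 1 * Λ * R₂) * (R₂ / R₁) ^ (2 * s.card) := by
  have hA0 : 0 ≤ A := nonneg_of_forall_mem_sphere_norm_le hR₁.le hA
  have hR₂ : 0 < R₂ := hR₁.trans_le hR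
  have hx : 1 ≤ R₂ / R₁ := (one_le_div hR₁).mpr hR
  have hR₃ : R₂ < Real.exp 1 * R₂ := lt_mul_of_one_lt_left hR₂ (by simp)
  set K := (Real.exp 1 * (R₂ / R₁)) ^ s.card * Real.exp (2 * Real.exp 1 * Λ * R₂ + s.card)
  have hK : ∀ w ∈ sphere z₀ (Real.exp 1 * R₂), ‖(f : ℂ → E) w‖ ≤ A * K := fun w hw => by
    convert norm_le_of_operatorWithRoots_eq_zero_of_mem_sphere hΛ hs hf hR₁ (hR.trans hR₃.le) hA hw
      using 5 <;> ring
  refine norm_le_of_forall_mem_frontier_norm_le isBounded_ball f.2.diffContOnCl (fun w hw => ?_)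
    (closure_ball z₀ hR₂.ne' ▸ hz)
  rw [frontier_ball z₀ hR₂.ne', mem_sphere_iff_norm] at hw
  have key := norm_le_interp_of_mem_annulus hR₁ (hR.trans_lt hR₃) f.2.diffContOnCl hA hK
    (hR.trans_eq hw.symm) (hw.trans_le hR₃.le)
  rw [hw, mul_div_assoc] at key
  set t := Real.log (R₂ / R₁) / Real.log (Real.exp 1 * (R₂ / R₁))
  calc ‖(f : ℂ → E) w‖ ≤ A ^ (1 - t) * (A * K) ^ t := key
    _ = A * K ^ t := by
        rw [Real.mul_rpow hA0 (by positivity), ← mul_assoc, ← Real.rpow_add' hA0 (by simp),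
          sub_add_cancel, Real.rpow_one]
    _ ≤ A * (Real.exp (2 * Real.exp 1 * Λ * R₂) * (R₂ / R₁) ^ (2 * s.card)) := by
        gcongr
        exact rpow_log_div_log_exp_mul_le hx (by positivity) s.card
    _ = _ := (mul_assoc _ _ _).symm

theorem sSup_norm_closedBall_le_of_operatorWithRoots_eq_zero (hΛ : 0 ≤ Λ)
    (hs : ∀ a ∈ s, ‖a‖ ≤ Λ) (hf : operatorWithRoots (entireDeriv E) s f = 0) (hR₁ : 0 < R₁)
    (hR : R₁ ≤ R₂) :
    sSup ((fun z => ‖(f : ℂ → E) z‖) '' closedBall z₀ R₂) ≤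
      sSup ((fun z => ‖(f : ℂ → E) z‖) '' closedBall z₀ R₁) *
        Real.exp (2 * Real.exp 1 * Λ * R₂) * (R₂ / R₁) ^ (2 * s.card) := by
  have hcont : Continuous fun z => ‖(f : ℂ → E) z‖ := (Differentiable.continuous f.2).norm
  refine csSup_le ((nonempty_closedBall.mpr (hR₁.le.trans hR)).image _) ?_
  rintro _ ⟨z, hz, rfl⟩
  exact norm_le_of_operatorWithRoots_eq_zero_of_mem_closedBall hΛ hs hf hR₁ hR
    (fun w hw => le_csSup ((isCompact_closedBall z₀ R₁).bddAbove_image hcont.continuousOn)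
      (mem_image_of_mem _ (sphere_subset_closedBall hw))) hz

end Growth

section ExponentialPolynomials

/-- The entire function `z ^ a * e ^ (b z)`. -/
noncomputable def expMonomial (a : ℕ) (b : ℂ) : entireFunctions ℂ :=
  ⟨fun z => z ^ a * exp (b * z), by change Differentiable ℂ _; fun_prop⟩

lemma entireDeriv_expMonomial_sub_smul (a : ℕ) (b : ℂ) :
    entireDeriv ℂ (expMonomial a b) - b • expMonomial a b = (a : ℂ) • expMonomial (a - 1) b := by
  ext z
  have h : HasDerivAt (fun z => z ^ a * exp (b * z))
      (a * z ^ (a - 1) * exp (b * z) + z ^ a * (exp (b * z) * b)) z :=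
    (hasDerivAt_pow a z).mul (((hasDerivAt_id z).const_mul b).cexp.congr_deriv (by simp))
  change deriv (fun z => z ^ a * exp (b * z)) z - b * (z ^ a * exp (b * z)) =
    a * (z ^ (a - 1) * exp (b * z))
  rw [h.deriv]
  ring

lemma operatorWithRoots_replicate_expMonomial (a : ℕ) (b : ℂ) :
    operatorWithRoots (entireDeriv ℂ) (Multiset.replicate (a + 1) b) (expMonomial a b) = 0 := by
  induction a with
  | zero =>
    rw [Multiset.replicate_succ, operatorWithRoots_cons_apply', entireDeriv_expMonomial_sub_smul,
      Nat.cast_zero, zero_smul, map_zero]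
  | succ a ih =>
    rw [Multiset.replicate_succ, operatorWithRoots_cons_apply', entireDeriv_expMonomial_sub_smul,
      map_smul, Nat.add_sub_cancel, ih, smul_zero]

/-- The entire function `P(z, e^z)`. -/
noncomputable def expPolynomial (P : MvPolynomial (Fin 2) ℂ) : entireFunctions ℂ :=
  ∑ s ∈ P.support, P.coeff s • expMonomial (s 0) (s 1)

lemma coe_expPolynomial (P : MvPolynomial (Fin 2) ℂ) :
    (expPolynomial P : ℂ → ℂ) = fun z => MvPolynomial.eval ![z, exp z] P := by
  ext z
  simp [expPolynomial, expMonomial, MvPolynomial.eval_eq', exp_nat_mul]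

/-- The numbers `0, …, d`, each taken `m + 1` times: the characteristic roots of a differential
equation satisfied by `P(z, e^z)` for all `P` of degree at most `m` in `z` and `d` in `w`. -/
noncomputable def expPolynomialRoots (m d : ℕ) : Multiset ℂ :=
  (m + 1) • (Multiset.range (d + 1)).map Nat.cast

lemma card_expPolynomialRoots (m d : ℕ) : (expPolynomialRoots m d).card = (m + 1) * (d + 1) := by
  simp [expPolynomialRoots]

lemma norm_le_of_mem_expPolynomialRoots {m d : ℕ} {a : ℂ} (ha : a ∈ expPolynomialRoots m d) :
    ‖a‖ ≤ d := by
  obtain ⟨b, hb, rfl⟩ := Multiset.mem_map.mp (Multiset.mem_of_mem_nsmul ha)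
  rw [norm_natCast, Nat.cast_le]
  exact Nat.lt_succ_iff.mp (Multiset.mem_range.mp hb)

lemma replicate_le_expPolynomialRoots {m d a b : ℕ} (ha : a ≤ m) (hb : b ≤ d) :
    Multiset.replicate (a + 1) (b : ℂ) ≤ expPolynomialRoots m d := by
  have hmem : (b : ℂ) ∈ (Multiset.range (d + 1)).map Nat.cast :=
    Multiset.mem_map_of_mem _ (Multiset.mem_range.mpr (Nat.lt_succ_of_le hb))
  rw [← Multiset.le_count_iff_replicate_le, expPolynomialRoots, Multiset.count_nsmul]
  exact (Nat.succ_le_succ ha).trans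
    (Nat.le_mul_of_pos_right _ (Multiset.count_pos.mpr hmem))

lemma operatorWithRoots_expPolynomial {P : MvPolynomial (Fin 2) ℂ} {m d : ℕ}
    (hm : P.degreeOf 0 ≤ m) (hd : P.degreeOf 1 ≤ d) :
    operatorWithRoots (entireDeriv ℂ) (expPolynomialRoots m d) (expPolynomial P) = 0 := by
  rw [expPolynomial, map_sum]
  refine Finset.sum_eq_zero fun s hs => ?_
  have hle := replicate_le_expPolynomialRoots ((MvPolynomial.monomial_le_degreeOf 0 hs).trans hm)
    ((MvPolynomial.monomial_le_degreeOf 1 hs).trans hd)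
  rw [map_smul, operatorWithRoots_apply_eq_zero_of_le hle
    (operatorWithRoots_replicate_expMonomial _ _), smul_zero]

end ExponentialPolynomials

theorem bernstein_walsh_exponential_polynomials_general {P : MvPolynomial (Fin 2) ℂ} {m d : ℕ}
    (hm : P.degreeOf 0 ≤ m) (hd : P.degreeOf 1 ≤ d) (z₀ : ℂ) {R₁ R₂ : ℝ} (hR₁ : 0 < R₁)
    (hR : R₁ ≤ R₂) :
    sSup ((fun z : ℂ => ‖MvPolynomial.eval ![z, exp z] P‖) '' closedBall z₀ R₂) ≤
      sSup ((fun z : ℂ => ‖MvPolynomial.eval ![z, exp z] P‖) '' closedBall z₀ R₁) *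
        Real.exp (2 * Real.exp 1 * d * R₂) * (R₂ / R₁) ^ (2 * ((m + 1) * (d + 1))) := by
  simpa [coe_expPolynomial, card_expPolynomialRoots] using
    sSup_norm_closedBall_le_of_operatorWithRoots_eq_zero (z₀ := z₀) d.cast_nonneg
      (fun _ => norm_le_of_mem_expPolynomialRoots) (operatorWithRoots_expPolynomial hm hd) hR₁ hR

/-- (Tijdeman/Baker doubling estimate for exponential polynomials.)
There are constants `c₁, c₂ > 0` such that for every exponential polynomial
`f(z) = P(z, e^z)` with `P` of total degree at most `n ≥ 1`, every centre `z₀` and all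
radii `0 < R₁ ≤ R₂`, one has `M(R₂) ≤ M(R₁) e^{c₁ R₂ n} (R₂/R₁)^{c₂ n²}` where
`M(R) = max_{|z - z₀| ≤ R} |f(z)|`. -/
theorem bernstein_walsh_exponential_polynomials :
    ∃ c₁ > (0 : ℝ), ∃ c₂ > (0 : ℝ),
      ∀ n : ℕ, 1 ≤ n → ∀ P : MvPolynomial (Fin 2) ℂ, P.totalDegree ≤ n →
      ∀ z₀ : ℂ, ∀ R₁ R₂ : ℝ, 0 < R₁ → R₁ ≤ R₂ →
        sSup ((fun z : ℂ => ‖MvPolynomial.eval ![z, Complex.exp z] P‖) ''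
            Metric.closedBall z₀ R₂) ≤
          sSup ((fun z : ℂ => ‖MvPolynomial.eval ![z, Complex.exp z] P‖) ''
              Metric.closedBall z₀ R₁) *
            Real.exp (c₁ * R₂ * n) * (R₂ / R₁) ^ (c₂ * (n : ℝ) ^ 2) := by
  refine ⟨2 * Real.exp 1, by positivity, 8, by norm_num, fun n hn P hP z₀ R₁ R₂ hR₁ hR => ?_⟩
  have hdeg (i : Fin 2) : P.degreeOf i ≤ n := (P.degreeOf_le_totalDegree i).trans hP
  have hsSup : 0 ≤ sSup ((fun z : ℂ => ‖MvPolynomial.eval ![z, exp z] P‖) '' closedBall z₀ R₁) :=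
    Real.sSup_nonneg (forall_mem_image.mpr fun z _ => norm_nonneg _)
  refine (bernstein_walsh_exponential_polynomials_general (hdeg 0) (hdeg 1) z₀ hR₁ hR).trans ?_
  rw [mul_right_comm _ (n : ℝ) R₂, ← Real.rpow_natCast]
  have hn' : (1 : ℝ) ≤ n := by exact_mod_cast hn
  gcongr
  · exact (one_le_div hR₁).mpr hR
  · push_cast
    nlinarith
end

section
/- Let t ∈ ℂ[z] be a fixed polynomial. For every z₀ ∈ ℂ and all radii 0 < R₁ ≤ R₂ there is a constant C = C(t, z₀, R₁, R₂) ≥ 1 such that for every integer n ≥ 1 and every bivariate polynomial P ∈ ℂ[z,w] of total degree at most n with max_{|z−z₀|≤R₁} |P(z, e^{t(z)})| ≤ 1, one has |P(z, e^{t(z)})| ≤ C^{n²} for all z ∈ ℂ with |z−z₀| ≤ R₂. (Equivalently: the generalized Siciak extremal function Φ_K(z; V, φ) with K the closed disk of radius R₁ centred at z₀, V_n = {P(z,e^{t(z)}) : deg P ≤ n}, and exponent function φ(n) = n², is bounded on the disk of radius R₂ centred at z₀.) -/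
/-!
Write `f(z) = P(z, e^{t(z)})` with `deg P ≤ n`.

If `t` is constant, `f` is a polynomial of degree at most `n` and Cauchy's estimates for its
Taylor coefficients suffice. If `t` has degree `d ≥ 1`, one first finds a radius `R`, with `R ^ d`
proportional to `n`, at which `f` satisfies a doubling inequality
`sup_{2R} ‖f‖ ≤ C ^ (n ^ 2) * sup_R ‖f‖`. For each of the values `w = 1, …, n + 1`, the function
`e^t` takes the value `w` at `n + 1` well separated points of the disk of radius `R`; Lagrange
interpolation in the first variable at these points, and then in the second variable at the
points `w`, bounds `P` at every point of the graph over the disk of radius `2R`.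

The doubling inequality makes the Taylor terms of `f` of order at least `k n²` negligible, on the
disk of radius `R`, compared with `sup_R ‖f‖`, so `f` behaves like a polynomial of degree `k n²`
and grows from the disk of radius `R₁` to that of radius `R₂` at most like `(R₂ / R₁) ^ (k n²)`.
-/

open Metric Polynomial

section EntireFunctions

variable {E : Type*} [NormedAddCommGroup E] [NormedSpace ℂ E] [CompleteSpace E]
  {f : ℂ → E} {c z : ℂ} {A B K r ρ s : ℝ}

theorem norm_taylorTerm_le (hr : 0 < r) (hf : DiffContOnCl ℂ f (ball c r))
    (hA : ∀ x ∈ sphere c r, ‖f x‖ ≤ A) (hz : z ∈ closedBall c ρ) (m : ℕ) :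
    ‖(m.factorial : ℂ)⁻¹ • (z - c) ^ m • iteratedDeriv m f c‖ ≤ A * (ρ / r) ^ m := by
  have hcauchy := Complex.norm_iteratedDeriv_le_of_forall_mem_sphere_norm_le m hr hf hA
  have hzρ : ‖z - c‖ ≤ ρ := mem_closedBall_iff_norm.1 hz
  have hρ : 0 ≤ ρ := (norm_nonneg _).trans hzρ
  rw [norm_smul, norm_smul, norm_inv, norm_pow, Complex.norm_natCast]
  calc (m.factorial : ℝ)⁻¹ * (‖z - c‖ ^ m * ‖iteratedDeriv m f c‖)
      ≤ (m.factorial : ℝ)⁻¹ * (ρ ^ m * (m.factorial * A / r ^ m)) := by gcongr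
    _ = A * (ρ / r) ^ m := by rw [div_pow]; field_simp

theorem norm_sum_taylorTerm_le (hr : 0 < r) (hrρ : r ≤ ρ) (hf : DiffContOnCl ℂ f (ball c r))
    (hA : ∀ x ∈ sphere c r, ‖f x‖ ≤ A) (hz : z ∈ closedBall c ρ) (N : ℕ) :
    ‖∑ m ∈ Finset.range (N + 1), (m.factorial : ℂ)⁻¹ • (z - c) ^ m • iteratedDeriv m f c‖ ≤
      (N + 1) * (A * (ρ / r) ^ N) := by
  have hA₀ : 0 ≤ A := by
    obtain ⟨x, hx⟩ := (NormedSpace.sphere_nonempty (x := c)).2 hr.le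
    exact (norm_nonneg _).trans (hA x hx)
  have hone : 1 ≤ ρ / r := (one_le_div hr).2 hrρ
  refine (norm_sum_le_of_le (n := fun _ ↦ A * (ρ / r) ^ N) _ fun m hm ↦ ?_).trans (by simp)
  have hmN : m ≤ N := Nat.lt_succ_iff.1 (Finset.mem_range.1 hm)
  exact (norm_taylorTerm_le hr hf hA hz m).trans (by gcongr)

theorem norm_le_of_norm_le_on_closedBalls (hf : Differentiable ℂ f) (hr : 0 < r)
    (hrρ : r ≤ ρ) (hρs : 2 * ρ ≤ s) (hA : ∀ x ∈ closedBall c r, ‖f x‖ ≤ A)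
    (hB : ∀ x ∈ closedBall c s, ‖f x‖ ≤ B) (hz : z ∈ closedBall c ρ) (N : ℕ) :
    ‖f z‖ ≤ (N + 1) * (A * (ρ / r) ^ N) + 2 * (B * (ρ / s) ^ (N + 1)) := by
  have hρ : 0 < ρ := hr.trans_le hrρ
  have hs : 0 < s := by linarith
  have hratio : ρ / s ≤ 1 / 2 := by rw [div_le_div_iff₀ hs two_pos]; linarith
  have hB₀ : 0 ≤ B := (norm_nonneg _).trans (hB c (mem_closedBall_self hs.le))
  have hhead := norm_sum_taylorTerm_le hr hrρ hf.diffContOnCl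
    (fun x hx ↦ hA x (sphere_subset_closedBall hx)) hz N
  have htail := norm_sub_le_of_geometric_bound_of_hasSum (hratio.trans_lt one_half_lt_one)
    (norm_taylorTerm_le hs hf.diffContOnCl (fun x hx ↦ hB x (sphere_subset_closedBall hx)) hz)
    (Complex.hasSum_taylorSeries_of_entire hf c z) (N + 1)
  have htail' : B * (ρ / s) ^ (N + 1) / (1 - ρ / s) ≤ 2 * (B * (ρ / s) ^ (N + 1)) := by
    rw [div_le_iff₀ (by linarith)]
    have : 0 ≤ B * (ρ / s) ^ (N + 1) := by positivity
    nlinarith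
  rw [norm_sub_rev] at htail
  exact (norm_le_norm_add_norm_sub' _ _).trans (add_le_add hhead (htail.trans htail'))

theorem norm_le_of_doubling (hf : Differentiable ℂ f) (hr : 0 < r) (hrs : r ≤ s) {N : ℕ}
    (hN : 2 * K ≤ 2 ^ N) (hA : ∀ x ∈ closedBall c r, ‖f x‖ ≤ A)
    (hdouble : ∀ M, (∀ x ∈ closedBall c s, ‖f x‖ ≤ M) →
      ∀ x ∈ closedBall c (2 * s), ‖f x‖ ≤ K * M) (hz : z ∈ closedBall c s) :
    ‖f z‖ ≤ 2 * ((N + 1) * (A * (s / r) ^ N)) := by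
  have hs : 0 < s := hr.trans_le hrs
  obtain ⟨x, hx, hmax⟩ := (isCompact_closedBall c s).exists_isMaxOn ⟨z, hz⟩
    hf.continuous.norm.continuousOn
  refine (hmax hz).trans ?_
  have hM := norm_le_of_norm_le_on_closedBalls hf hr hrs le_rfl hA
    (hdouble ‖f x‖ fun y hy ↦ hmax hy) hx N
  have htail : 2 * (K * ‖f x‖ * (s / (2 * s)) ^ (N + 1)) ≤ ‖f x‖ / 2 := by
    have hK : K * (1 / 2) ^ N ≤ 1 / 2 := by
      rw [one_div_pow, mul_one_div, div_le_iff₀ (by positivity)]; linarith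
    rw [div_mul_cancel_right₀ hs.ne', ← one_div, pow_succ]
    nlinarith [norm_nonneg (f x)]
  linarith

theorem norm_le_mul_pow_of_doubling (hf : Differentiable ℂ f) (hr : 0 < r) (hrρ : r ≤ ρ)
    (hρs : 2 * ρ ≤ s) {N : ℕ} (hN : 2 * K ≤ 2 ^ N) (hA : ∀ x ∈ closedBall c r, ‖f x‖ ≤ A)
    (hdouble : ∀ M, (∀ x ∈ closedBall c s, ‖f x‖ ≤ M) →
      ∀ x ∈ closedBall c (2 * s), ‖f x‖ ≤ K * M) (hz : z ∈ closedBall c ρ) :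
    ‖f z‖ ≤ 3 * (A * (2 * ρ / r) ^ N) := by
  have hρ : 0 < ρ := hr.trans_le hrρ
  have hs : 0 < s := by linarith
  have hA₀ : 0 ≤ A := (norm_nonneg _).trans (hA c (mem_closedBall_self hr.le))
  have hmain := norm_le_of_norm_le_on_closedBalls hf hr hrρ hρs hA
    (fun x hx ↦ norm_le_of_doubling hf hr (by linarith) hN hA hdouble hx) hz N
  have hratio : ρ / s ≤ 1 / 2 := by rw [div_le_div_iff₀ hs two_pos]; linarith
  have htail : (s / r) ^ N * (ρ / s) ^ (N + 1) ≤ (ρ / r) ^ N * (1 / 2) := by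
    rw [pow_succ, ← mul_assoc, ← mul_pow, mul_comm (s / r), div_mul_div_cancel₀ hs.ne']
    gcongr
  have hN₂ : (N + 1 : ℝ) ≤ 2 ^ N := by exact_mod_cast N.lt_two_pow_self
  calc ‖f z‖
      ≤ (N + 1) * (A * (ρ / r) ^ N)
          + 4 * ((N + 1) * A) * ((s / r) ^ N * (ρ / s) ^ (N + 1)) := by linarith
    _ ≤ (N + 1) * (A * (ρ / r) ^ N) + 4 * ((N + 1) * A) * ((ρ / r) ^ N * (1 / 2)) := by gcongr
    _ = 3 * ((N + 1) * (A * (ρ / r) ^ N)) := by ring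
    _ ≤ 3 * (2 ^ N * (A * (ρ / r) ^ N)) := by gcongr
    _ = 3 * (A * (2 * ρ / r) ^ N) := by rw [mul_div_assoc, mul_pow]; ring

end EntireFunctions

section Polynomials

variable {𝕜 : Type*}

theorem iteratedDeriv_eval [NontriviallyNormedField 𝕜] (p : 𝕜[X]) (m : ℕ) (x : 𝕜) :
    iteratedDeriv m (fun y ↦ p.eval y) x = (derivative^[m] p).eval x := by
  induction m generalizing p with
  | zero => simp
  | succ m ih =>
    have hderiv : deriv (fun y ↦ p.eval y) = fun y ↦ p.derivative.eval y := funext fun _ ↦ p.deriv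
    rw [iteratedDeriv_succ', hderiv, ih, Function.iterate_succ_apply]

theorem norm_eval_le_mul_pow {p : ℂ[X]} {n : ℕ} (hp : p.natDegree ≤ n) {c z : ℂ}
    {A r ρ : ℝ} (hr : 0 < r) (hrρ : r ≤ ρ) (hA : ∀ x ∈ closedBall c r, ‖p.eval x‖ ≤ A)
    (hz : z ∈ closedBall c ρ) : ‖p.eval z‖ ≤ (n + 1) * (A * (ρ / r) ^ n) := by
  have hderiv : ∀ m ∉ Finset.range (n + 1),
      (m.factorial : ℂ)⁻¹ • (z - c) ^ m • iteratedDeriv m (fun x ↦ p.eval x) c = 0 := by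
    intro m hm
    have hpm : p.natDegree < m := by
      have := Finset.mem_range.not.1 hm
      omega
    rw [iteratedDeriv_eval, iterate_derivative_eq_zero hpm, eval_zero, smul_zero, smul_zero]
  have htaylor := (Complex.hasSum_taylorSeries_of_entire p.differentiable c z).unique
    (hasSum_sum_of_ne_finset_zero hderiv)
  rw [htaylor]
  exact norm_sum_taylorTerm_le hr hrρ p.differentiable.diffContOnCl
    (fun x hx ↦ hA x (sphere_subset_closedBall hx)) hz n

theorem exists_norm_eval_le_mul_pow [NormedField 𝕜] (p : 𝕜[X]) {n : ℕ} (hp : p.natDegree ≤ n)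
    (c : 𝕜) : ∃ S : ℝ, 0 < S ∧ ∀ r : ℝ, 1 ≤ r → ∀ x ∈ closedBall c r, ‖p.eval x‖ ≤ S * r ^ n := by
  set q := taylor c p with hq
  refine ⟨∑ i ∈ Finset.range (n + 1), ‖q.coeff i‖ + 1, by positivity, fun r hr x hx ↦ ?_⟩
  have hqn : q.natDegree < n + 1 := by rw [hq, natDegree_taylor]; omega
  have hxr : ‖x - c‖ ≤ r := mem_closedBall_iff_norm.1 hx
  have heval : p.eval x = ∑ i ∈ Finset.range (n + 1), q.coeff i * (x - c) ^ i := by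
    rw [← eval_eq_sum_range' hqn, hq, taylor_eval_sub]
  calc ‖p.eval x‖ ≤ ∑ i ∈ Finset.range (n + 1), ‖q.coeff i‖ * r ^ n := by
        rw [heval]
        refine norm_sum_le_of_le _ fun i hi ↦ ?_
        have hin : i ≤ n := Nat.lt_succ_iff.1 (Finset.mem_range.1 hi)
        rw [norm_mul, norm_pow]
        gcongr
        exact (pow_le_pow_left₀ (norm_nonneg _) hxr i).trans (pow_le_pow_right₀ hr hin)
    _ = (∑ i ∈ Finset.range (n + 1), ‖q.coeff i‖) * r ^ n := by rw [Finset.sum_mul]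
    _ ≤ (∑ i ∈ Finset.range (n + 1), ‖q.coeff i‖ + 1) * r ^ n := by gcongr; linarith

theorem exists_dist_eval_le_mul_pow [RCLike 𝕜] (p : 𝕜[X]) (c : 𝕜) :
    ∃ S : ℝ, 0 < S ∧ ∀ r : ℝ, 1 ≤ r → ∀ x ∈ closedBall c r, ∀ y ∈ closedBall c r,
      dist (p.eval x) (p.eval y) ≤ S * r ^ (p.natDegree - 1) * dist x y := by
  obtain ⟨S, hS, hderiv⟩ := exists_norm_eval_le_mul_pow p.derivative p.natDegree_derivative_le c
  refine ⟨S, hS, fun r hr x hx y hy ↦ ?_⟩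
  simp only [dist_eq_norm]
  exact (convex_closedBall c r).norm_image_sub_le_of_norm_deriv_le
    (fun w _ ↦ p.differentiableAt) (fun w hw ↦ by rw [p.deriv]; exact hderiv r hr w hw) hy hx

theorem norm_leadingCoeff_pos_of_natDegree_ne_zero [NormedField 𝕜] {p : 𝕜[X]}
    (hp : p.natDegree ≠ 0) : 0 < ‖p.leadingCoeff‖ :=
  norm_pos_iff.2 (leadingCoeff_ne_zero.2 (ne_zero_of_natDegree_gt (Nat.pos_of_ne_zero hp)))

theorem exists_eval_eq_and_norm_mul_dist_pow_le [NormedField 𝕜] [IsAlgClosed 𝕜] {p : 𝕜[X]}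
    (hp : p.natDegree ≠ 0) (c z : 𝕜) :
    ∃ x, p.eval x = c ∧ ‖p.leadingCoeff‖ * dist z x ^ p.natDegree ≤ dist (p.eval z) c := by
  classical
  set q := p - C c with hq
  have hqp : q.natDegree = p.natDegree := natDegree_sub_C
  have hcard : q.roots.card = p.natDegree := by rw [IsAlgClosed.card_roots_eq_natDegree, hqp]
  have hnonempty : q.roots.toFinset.Nonempty := by
    rw [Multiset.toFinset_nonempty, ← Multiset.card_pos, hcard]; omega
  obtain ⟨x, hx, hmin⟩ := q.roots.toFinset.exists_min_image (dist z) hnonempty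
  simp only [Multiset.mem_toFinset] at hx hmin
  have hroot : p.eval x = c := by simpa [hq, sub_eq_zero] using isRoot_of_mem_roots hx
  have hlead : q.leadingCoeff = p.leadingCoeff :=
    leadingCoeff_sub_of_degree_lt (degree_C_le.trans_lt (natDegree_pos_iff_degree_pos.1 (by omega)))
  refine ⟨x, hroot, ?_⟩
  calc ‖p.leadingCoeff‖ * dist z x ^ p.natDegree
      = ‖p.leadingCoeff‖ * (q.roots.map fun _ ↦ dist z x).prod := by simp [hcard]
    _ ≤ ‖p.leadingCoeff‖ * (q.roots.map (dist z)).prod := by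
        gcongr
        exact Multiset.prod_map_le_prod_map₀ _ _ (fun _ _ ↦ dist_nonneg) hmin
    _ = ‖q.eval z‖ := by
        rw [(IsAlgClosed.splits q).eval_eq_prod_roots, norm_mul, hlead]
        simp only [dist_eq_norm]
        exact congrArg _ (Multiset.prod_hom' _ (normHom : 𝕜 →*₀ ℝ) _)
    _ = dist (p.eval z) c := by rw [hq, eval_sub, eval_C, dist_eq_norm]

theorem norm_eval_le_of_separated_nodes [NormedField 𝕜] {p : 𝕜[X]} {n : ℕ}
    (hp : p.natDegree ≤ n) {v : Fin (n + 1) → 𝕜} {x : 𝕜} {δ D M : ℝ} (hδ : 0 < δ)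
    (hv : Pairwise fun i j ↦ δ ≤ dist (v i) (v j)) (hD : ∀ i, dist x (v i) ≤ D)
    (hM : ∀ i, ‖p.eval (v i)‖ ≤ M) : ‖p.eval x‖ ≤ (n + 1) * ((D / δ) ^ n * M) := by
  have hinj : Set.InjOn v (Finset.univ : Finset (Fin (n + 1))) := by
    intro i _ j _ hij
    by_contra hne
    exact hδ.not_ge (by simpa [hij] using hv hne)
  have hdeg : p.degree < (Finset.univ : Finset (Fin (n + 1))).card := by
    rw [Finset.card_fin]
    exact degree_le_natDegree.trans_lt (by exact_mod_cast Nat.lt_succ_of_le hp)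
  have hD₀ : 0 ≤ D := dist_nonneg.trans (hD 0)
  have hbasis : ∀ i, ‖(Lagrange.basis Finset.univ v i).eval x‖ ≤ (D / δ) ^ n := by
    intro i
    have hfactor : ∀ j ∈ Finset.univ.erase i,
        ‖(Lagrange.basisDivisor (v i) (v j)).eval x‖ ≤ D / δ := by
      intro j hj
      simp only [Lagrange.basisDivisor, eval_mul, eval_C, eval_sub, eval_X, inv_mul_eq_div,
        norm_div, ← dist_eq_norm]
      exact div_le_div₀ hD₀ (hD j) hδ (hv (Finset.ne_of_mem_erase hj).symm)
    rw [Lagrange.basis, eval_prod, norm_prod]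
    exact (Finset.prod_le_prod (fun _ _ ↦ norm_nonneg _) hfactor).trans_eq (by simp [div_pow])
  rw [Lagrange.eq_interpolate hinj hdeg, Lagrange.interpolate_apply, eval_finsetSum]
  refine (norm_sum_le_of_le (n := fun _ ↦ (D / δ) ^ n * M) _ fun i _ ↦ ?_).trans (by simp)
  rw [eval_mul, eval_C, norm_mul, mul_comm]
  exact mul_le_mul (hbasis i) (hM i) (norm_nonneg _) (by positivity)

theorem eval_aeval_eq_eval [CommSemiring 𝕜] {σ : Type*} (q : σ → 𝕜[X]) (P : MvPolynomial σ 𝕜)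
    (x : 𝕜) : (MvPolynomial.aeval q P).eval x = MvPolynomial.eval (fun i ↦ (q i).eval x) P := by
  have hC : (evalRingHom x).comp (algebraMap 𝕜 𝕜[X]) = RingHom.id 𝕜 := by ext; simp
  rw [MvPolynomial.aeval_def, MvPolynomial.polynomial_eval_eval₂, hC, MvPolynomial.eval₂_id]

theorem eval_aeval_X_C [CommSemiring 𝕜] (P : MvPolynomial (Fin 2) 𝕜) (x y : 𝕜) :
    (MvPolynomial.aeval ![X, C y] P).eval x = MvPolynomial.eval ![x, y] P := by
  have hxy : (fun i ↦ (![X, C y] i : 𝕜[X]).eval x) = ![x, y] := by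
    funext i; fin_cases i <;> simp
  rw [eval_aeval_eq_eval, hxy]

theorem eval_aeval_C_X [CommSemiring 𝕜] (P : MvPolynomial (Fin 2) 𝕜) (x y : 𝕜) :
    (MvPolynomial.aeval ![C x, X] P).eval y = MvPolynomial.eval ![x, y] P := by
  have hxy : (fun i ↦ (![C x, X] i : 𝕜[X]).eval y) = ![x, y] := by
    funext i; fin_cases i <;> simp
  rw [eval_aeval_eq_eval, hxy]

theorem natDegree_aeval_le_of_totalDegree_le [CommSemiring 𝕜] {σ : Type*} {P : MvPolynomial σ 𝕜}
    {n : ℕ} (hP : P.totalDegree ≤ n) {q : σ → 𝕜[X]} (hq : ∀ i, (q i).natDegree ≤ 1) :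
    (MvPolynomial.aeval q P).natDegree ≤ n := by
  simpa using MvPolynomial.aeval_natDegree_le P hP q hq

theorem norm_eval_le_of_separated_grid [NormedField 𝕜] {P : MvPolynomial (Fin 2) 𝕜} {n : ℕ}
    (hP : P.totalDegree ≤ n) {u : Fin (n + 1) → Fin (n + 1) → 𝕜} {v : Fin (n + 1) → 𝕜} {x y : 𝕜}
    {δ D δ' D' M : ℝ} (hδ : 0 < δ) (hu : ∀ j, Pairwise fun i k ↦ δ ≤ dist (u j i) (u j k))
    (hD : ∀ j i, dist x (u j i) ≤ D) (hδ' : 0 < δ')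
    (hv : Pairwise fun i j ↦ δ' ≤ dist (v i) (v j)) (hD' : ∀ j, dist y (v j) ≤ D')
    (hM : ∀ j i, ‖MvPolynomial.eval ![u j i, v j] P‖ ≤ M) :
    ‖MvPolynomial.eval ![x, y] P‖ ≤
      (n + 1) * ((D' / δ') ^ n * ((n + 1) * ((D / δ) ^ n * M))) := by
  have hrow (j) : ‖MvPolynomial.eval ![x, v j] P‖ ≤ (n + 1) * ((D / δ) ^ n * M) := by
    rw [← eval_aeval_X_C]
    exact norm_eval_le_of_separated_nodes
      (natDegree_aeval_le_of_totalDegree_le hP (by simp [Fin.forall_fin_two])) hδ (hu j) (hD j)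
      fun i ↦ by rw [eval_aeval_X_C]; exact hM j i
  rw [← eval_aeval_C_X]
  exact norm_eval_le_of_separated_nodes
    (natDegree_aeval_le_of_totalDegree_le hP (by simp [Fin.forall_fin_two])) hδ' hv hD'
    fun j ↦ by rw [eval_aeval_C_X]; exact hrow j

end Polynomials

section ExponentialGraph

/-- The function `z ↦ P(z, e^{t(z)})`; for `P` of total degree at most `n` these functions form
the space `V_n`. -/
noncomputable def expGraphEval (t : ℂ[X]) (P : MvPolynomial (Fin 2) ℂ) (z : ℂ) : ℂ :=
  MvPolynomial.eval ![z, Complex.exp (t.eval z)] P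

variable {t : ℂ[X]} {z₀ : ℂ} {n : ℕ}

theorem differentiable_expGraphEval (t : ℂ[X]) (P : MvPolynomial (Fin 2) ℂ) :
    Differentiable ℂ (expGraphEval t P) := by
  unfold expGraphEval
  simp only [MvPolynomial.eval_eq', Fin.prod_univ_two, Matrix.cons_val_zero, Matrix.cons_val_one]
  fun_prop

theorem one_le_dist_natCast {i j : ℕ} (hij : i ≠ j) : 1 ≤ dist (i : ℂ) j := by
  rw [← Complex.ofReal_natCast i, ← Complex.ofReal_natCast j, Complex.isometry_ofReal.dist_eq,
    Nat.dist_cast_real]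
  exact Nat.pairwise_one_le_dist hij

theorem norm_log_natCast_add_one_le {j : ℕ} (hj : j ≤ n) : ‖Complex.log (j + 1)‖ ≤ n := by
  have hlog : Complex.log (j + 1) = (Real.log (j + 1) : ℝ) := by
    exact_mod_cast (Complex.natCast_log (n := j + 1)).symm
  have hpos : (0 : ℝ) < j + 1 := j.cast_add_one_pos
  have hjn : (j : ℝ) ≤ n := by exact_mod_cast hj
  rw [hlog, Complex.norm_of_nonneg (Real.log_nonneg (by simp))]
  linarith [Real.log_le_sub_one_of_pos hpos]

theorem norm_exp_le_pow_of_norm_le {w : ℂ} {b : ℝ} (hw : ‖w‖ ≤ n * b) :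
    ‖Complex.exp w‖ ≤ Real.exp b ^ n := by
  rw [Complex.norm_exp, ← Real.exp_nat_mul]
  exact Real.exp_le_exp.2 ((Complex.re_le_norm w).trans hw)

theorem exists_separated_exp_eval_eq (ht : t.natDegree ≠ 0) {w : ℂ} (hw : w ≠ 0) {R L : ℝ}
    (hR₀ : 0 ≤ R) (hL : 0 < L)
    (hR : ‖t.eval z₀‖ + ‖Complex.log w‖ + 7 * n ≤ ‖t.leadingCoeff‖ * R ^ t.natDegree)
    (hlip : ∀ x ∈ closedBall z₀ R, ∀ y ∈ closedBall z₀ R,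
      dist (t.eval x) (t.eval y) ≤ L * dist x y) :
    ∃ v : Fin (n + 1) → ℂ, (∀ i, v i ∈ closedBall z₀ R ∧ Complex.exp (t.eval (v i)) = w) ∧
      Pairwise fun i j ↦ L⁻¹ ≤ dist (v i) (v j) := by
  have hperiod : ‖(2 * Real.pi * Complex.I : ℂ)‖ = 2 * Real.pi := by
    simp [Real.pi_pos.le]
  set logw : ℕ → ℂ := fun i ↦ Complex.log w + i * (2 * Real.pi * Complex.I) with hlogw
  have hexp (i) : Complex.exp (logw i) = w := by
    rw [hlogw, Complex.exp_add, Complex.exp_nat_mul_two_pi_mul_I, mul_one, Complex.exp_log hw]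
  have hnorm (i : Fin (n + 1)) : ‖logw i‖ ≤ ‖Complex.log w‖ + 7 * n := by
    have hi : ((i : ℕ) : ℝ) ≤ n := by exact_mod_cast i.is_le
    refine (norm_add_le _ _).trans ?_
    rw [norm_mul, hperiod, Complex.norm_natCast]
    nlinarith [Real.pi_lt_d2, Real.pi_pos]
  have hsep {i j : ℕ} (hij : i ≠ j) : 1 ≤ dist (logw i) (logw j) := by
    rw [hlogw, dist_add_left, dist_eq_norm, ← sub_mul, norm_mul, hperiod, ← dist_eq_norm]
    nlinarith [one_le_dist_natCast hij, Real.pi_gt_three]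
  choose v hv hdist using fun i : Fin (n + 1) ↦
    exists_eval_eq_and_norm_mul_dist_pow_le ht (logw i) z₀
  have hmem (i) : v i ∈ closedBall z₀ R := by
    refine mem_closedBall'.2 (le_of_pow_le_pow_left₀ ht hR₀
      (le_of_mul_le_mul_left ?_ (norm_leadingCoeff_pos_of_natDegree_ne_zero ht)))
    linarith [hdist i, dist_le_norm_add_norm (t.eval z₀) (logw i), hnorm i]
  refine ⟨v, fun i ↦ ⟨hmem i, by rw [hv, hexp]⟩, fun i j hij ↦ ?_⟩
  refine (inv_le_iff_one_le_mul₀' hL).2 ?_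
  calc 1 ≤ dist (t.eval (v i)) (t.eval (v j)) := by
        rw [hv, hv]; exact hsep (Fin.val_ne_of_ne hij)
    _ ≤ L * dist (v i) (v j) := hlip _ (hmem i) _ (hmem j)

theorem norm_expGraphEval_le_of_lipschitz (ht : t.natDegree ≠ 0) {R L : ℝ} (hR₀ : 0 ≤ R)
    (hL : 0 < L) (hR : ‖t.eval z₀‖ + 8 * n ≤ ‖t.leadingCoeff‖ * R ^ t.natDegree)
    (hlip : ∀ x ∈ closedBall z₀ R, ∀ y ∈ closedBall z₀ R,
      dist (t.eval x) (t.eval y) ≤ L * dist x y)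
    {P : MvPolynomial (Fin 2) ℂ} (hP : P.totalDegree ≤ n) {M : ℝ}
    (hM : ∀ x ∈ closedBall z₀ R, ‖expGraphEval t P x‖ ≤ M)
    {z : ℂ} (hz : z ∈ closedBall z₀ (2 * R)) {E : ℝ} (hE : ‖Complex.exp (t.eval z)‖ ≤ E) :
    ‖expGraphEval t P z‖ ≤
      (n + 1) * ((E + (n + 1)) ^ n * ((n + 1) * ((3 * (R * L)) ^ n * M))) := by
  have hnodes (j : Fin (n + 1)) := exists_separated_exp_eval_eq (n := n) ht (z₀ := z₀)
    (w := ((j : ℕ) : ℂ) + 1) (Nat.cast_add_one_ne_zero _) hR₀ hL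
    (by linarith [norm_log_natCast_add_one_le j.is_le]) hlip
  choose u hu husep using hnodes
  have hdist (j i) : dist z (u j i) ≤ 3 * R := by
    linarith [dist_triangle_right z (u j i) z₀, mem_closedBall.1 hz, mem_closedBall.1 (hu j i).1]
  have hvalue (j i) : ‖MvPolynomial.eval ![u j i, ((j : ℕ) : ℂ) + 1] P‖ ≤ M := by
    rw [← (hu j i).2]; exact hM _ (hu j i).1
  have hvsep : Pairwise fun i j : Fin (n + 1) ↦ 1 ≤ dist (((i : ℕ) : ℂ) + 1) ((j : ℕ) + 1) :=
    fun i j hij ↦ (one_le_dist_natCast (Fin.val_ne_of_ne hij)).trans_eq (dist_add_right _ _ _).symm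
  have hvdist (j : Fin (n + 1)) : dist (Complex.exp (t.eval z)) ((j : ℕ) + 1) ≤ E + (n + 1) := by
    have hj : ((j : ℕ) : ℝ) ≤ n := by exact_mod_cast j.is_le
    have hnorm : ‖((j : ℕ) : ℂ) + 1‖ ≤ n + 1 := (norm_add_le _ _).trans (by simpa using hj)
    exact (dist_le_norm_add_norm _ _).trans (add_le_add hE hnorm)
  have hgrid := norm_eval_le_of_separated_grid hP (inv_pos.2 hL) husep hdist one_pos hvsep hvdist
    hvalue
  rwa [div_one, div_inv_eq_mul, mul_assoc 3] at hgrid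

theorem interpolation_factor_le {a b : ℝ} (ha : 0 ≤ a) (hb : 0 ≤ b) (hn : n ≠ 0) :
    (n + 1) * ((a ^ n + (n + 1)) ^ n * ((n + 1) * (b * n) ^ n)) ≤
      (4 * (a + 2) * (2 * (b + 1))) ^ n ^ 2 := by
  have hsucc : (n + 1 : ℝ) ≤ 2 ^ n := by exact_mod_cast n.lt_two_pow_self
  have hsucc' : (n + 1 : ℝ) ≤ 2 ^ n ^ 2 :=
    hsucc.trans (pow_le_pow_right₀ one_le_two (Nat.le_self_pow two_ne_zero n))
  have hadd : a ^ n + (n + 1) ≤ (a + 2) ^ n :=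
    (add_le_add_right hsucc _).trans (pow_add_pow_le ha zero_le_two hn)
  have hmul : b * n ≤ (2 * (b + 1)) ^ n := by
    have hbn : b ≤ (b + 1) ^ n := (le_add_of_nonneg_right zero_le_one).trans
      (le_self_pow₀ (le_add_of_nonneg_left hb) hn)
    rw [mul_pow, mul_comm]
    gcongr
    linarith
  calc (n + 1) * ((a ^ n + (n + 1)) ^ n * ((n + 1) * (b * n) ^ n))
      ≤ 2 ^ n ^ 2 * (((a + 2) ^ n) ^ n * (2 ^ n ^ 2 * ((2 * (b + 1)) ^ n) ^ n)) := by gcongr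
    _ = (2 * 2 * (a + 2) * (2 * (b + 1))) ^ n ^ 2 := by
        rw [← pow_mul, ← pow_mul, ← sq]; simp only [mul_pow]; ring
    _ = (4 * (a + 2) * (2 * (b + 1))) ^ n ^ 2 := by norm_num

theorem exists_le_and_pow_eq {d : ℕ} (hd : d ≠ 0) {a b : ℝ} (ha : 0 ≤ a) (hab : a ^ d ≤ b) :
    ∃ x, a ≤ x ∧ x ^ d = b := by
  have hb : 0 ≤ b := (pow_nonneg ha d).trans hab
  have hpow : (b ^ (d⁻¹ : ℝ)) ^ d = b := Real.rpow_inv_natCast_pow hb hd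
  exact ⟨_, le_of_pow_le_pow_left₀ hd (by positivity) (hab.trans_eq hpow.symm), hpow⟩

theorem exists_doubling_radius (ht : t.natDegree ≠ 0) (z₀ : ℂ) (ρ : ℝ) :
    ∃ K : ℝ, 1 ≤ K ∧ ∀ n : ℕ, n ≠ 0 → ∃ R : ℝ, ρ ≤ R ∧
      ∀ P : MvPolynomial (Fin 2) ℂ, P.totalDegree ≤ n → ∀ M : ℝ,
        (∀ z ∈ closedBall z₀ R, ‖expGraphEval t P z‖ ≤ M) →
        ∀ z ∈ closedBall z₀ (2 * R), ‖expGraphEval t P z‖ ≤ K ^ n ^ 2 * M := by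
  set d := t.natDegree
  obtain ⟨S, -, hbound⟩ := exists_norm_eval_le_mul_pow t le_rfl z₀
  obtain ⟨S', hS', hlip⟩ := exists_dist_eval_le_mul_pow t z₀
  have hlead := norm_leadingCoeff_pos_of_natDegree_ne_zero ht
  set B := max 1 ρ ^ d + (‖t.eval z₀‖ + 8) / ‖t.leadingCoeff‖
  have hB₀ : 0 ≤ B := by positivity
  refine ⟨4 * (Real.exp (S * 2 ^ d * B) + 2) * (2 * (3 * S' * B + 1)), ?_, fun n hn ↦ ?_⟩
  · nlinarith [Real.exp_pos (S * 2 ^ d * B), show 0 ≤ 3 * S' * B by positivity]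
  have hn₁ : (1 : ℝ) ≤ n := Nat.one_le_cast.2 (Nat.one_le_iff_ne_zero.2 hn)
  obtain ⟨R, hmax, hRd⟩ : ∃ R, max 1 ρ ≤ R ∧ R ^ d = B * n :=
    exists_le_and_pow_eq ht (by positivity)
      ((le_add_of_nonneg_right (by positivity)).trans (le_mul_of_one_le_right hB₀ hn₁))
  have hR₁ : 1 ≤ R := (le_max_left _ _).trans hmax
  have hR₀ : 0 ≤ R := zero_le_one.trans hR₁
  refine ⟨R, (le_max_right _ _).trans hmax, fun P hP M hM z hz ↦ ?_⟩
  have hM₀ : 0 ≤ M := (norm_nonneg _).trans (hM z₀ (mem_closedBall_self hR₀))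
  have hlarge : ‖t.eval z₀‖ + 8 * n ≤ ‖t.leadingCoeff‖ * R ^ d := by
    have hlB : ‖t.eval z₀‖ + 8 ≤ ‖t.leadingCoeff‖ * B :=
      (div_le_iff₀' hlead).1 (le_add_of_nonneg_left (by positivity))
    rw [hRd]
    nlinarith [norm_nonneg (t.eval z₀)]
  have hexp : ‖Complex.exp (t.eval z)‖ ≤ Real.exp (S * 2 ^ d * B) ^ n :=
    norm_exp_le_pow_of_norm_le <| (hbound (2 * R) (by linarith) z hz).trans_eq <| by
      rw [mul_pow, hRd]; ring
  have hRL : 3 * (R * (S' * R ^ (d - 1))) = 3 * S' * B * n := by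
    rw [mul_left_comm R, mul_pow_sub_one ht, hRd]; ring
  have hinterp := norm_expGraphEval_le_of_lipschitz ht hR₀ (by positivity) hlarge (hlip R hR₁) hP
    hM hz hexp
  rw [hRL] at hinterp
  calc ‖expGraphEval t P z‖ ≤ _ := hinterp
    _ = (n + 1) * ((Real.exp (S * 2 ^ d * B) ^ n + (n + 1)) ^ n *
          ((n + 1) * (3 * S' * B * n) ^ n)) * M := by ring
    _ ≤ _ := by gcongr; exact interpolation_factor_le (Real.exp_nonneg _) (by positivity) hn

variable {R₁ R₂ : ℝ}

theorem norm_expGraphEval_C_le (b : ℂ) (hR₁ : 0 < R₁) (hR₁₂ : R₁ ≤ R₂)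
    {P : MvPolynomial (Fin 2) ℂ} (hP : P.totalDegree ≤ n) {A : ℝ}
    (hA : ∀ z ∈ closedBall z₀ R₁, ‖expGraphEval (C b) P z‖ ≤ A) {z : ℂ}
    (hz : z ∈ closedBall z₀ R₂) :
    ‖expGraphEval (C b) P z‖ ≤ (n + 1) * (A * (R₂ / R₁) ^ n) := by
  simp only [expGraphEval, eval_C, ← eval_aeval_X_C] at hA ⊢
  exact norm_eval_le_mul_pow
    (natDegree_aeval_le_of_totalDegree_le hP (by simp [Fin.forall_fin_two])) hR₁ hR₁₂ hA hz

theorem exists_norm_expGraphEval_C_le_pow (b z₀ : ℂ) (hR₁ : 0 < R₁) (hR₁₂ : R₁ ≤ R₂) :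
    ∃ C₀ : ℝ, 1 ≤ C₀ ∧ ∀ n : ℕ, ∀ P : MvPolynomial (Fin 2) ℂ, P.totalDegree ≤ n →
      (∀ z ∈ closedBall z₀ R₁, ‖expGraphEval (C b) P z‖ ≤ 1) →
      ∀ z ∈ closedBall z₀ R₂, ‖expGraphEval (C b) P z‖ ≤ C₀ ^ n ^ 2 := by
  have hq : 1 ≤ R₂ / R₁ := (one_le_div hR₁).2 hR₁₂
  refine ⟨2 * (R₂ / R₁), by linarith, fun n P hP h z hz ↦ ?_⟩
  have hsucc : (n + 1 : ℝ) ≤ 2 ^ n := by exact_mod_cast n.lt_two_pow_self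
  calc ‖expGraphEval (C b) P z‖
      ≤ (n + 1) * (1 * (R₂ / R₁) ^ n) := norm_expGraphEval_C_le b hR₁ hR₁₂ hP h hz
    _ ≤ 2 ^ n * (1 * (R₂ / R₁) ^ n) := by gcongr
    _ = (2 * (R₂ / R₁)) ^ n := by rw [one_mul, mul_pow]
    _ ≤ (2 * (R₂ / R₁)) ^ n ^ 2 :=
        pow_le_pow_right₀ (by linarith) (Nat.le_self_pow two_ne_zero n)

theorem exists_norm_expGraphEval_le_pow_of_natDegree_ne_zero (ht : t.natDegree ≠ 0) (z₀ : ℂ)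
    (hR₁ : 0 < R₁) (hR₁₂ : R₁ ≤ R₂) :
    ∃ C₀ : ℝ, 1 ≤ C₀ ∧ ∀ n : ℕ, n ≠ 0 → ∀ P : MvPolynomial (Fin 2) ℂ, P.totalDegree ≤ n →
      (∀ z ∈ closedBall z₀ R₁, ‖expGraphEval t P z‖ ≤ 1) →
      ∀ z ∈ closedBall z₀ R₂, ‖expGraphEval t P z‖ ≤ C₀ ^ n ^ 2 := by
  obtain ⟨K, hK₁, hK⟩ := exists_doubling_radius ht z₀ (2 * R₂)
  obtain ⟨k, hk⟩ := pow_unbounded_of_one_lt (2 * K) one_lt_two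
  have hq : 1 ≤ 2 * R₂ / R₁ := (one_le_div hR₁).2 (by linarith)
  refine ⟨(3 * (2 * R₂ / R₁)) ^ k, one_le_pow₀ (by linarith), fun n hn P hP h z hz ↦ ?_⟩
  obtain ⟨R, hR, hdouble⟩ := hK n hn
  have hN : 2 * K ^ n ^ 2 ≤ 2 ^ (k * n ^ 2) := calc
    2 * K ^ n ^ 2 ≤ 2 ^ n ^ 2 * K ^ n ^ 2 := by
      gcongr
      exact le_self_pow₀ one_le_two (pow_ne_zero 2 hn)
    _ = (2 * K) ^ n ^ 2 := (mul_pow _ _ _).symm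
    _ ≤ 2 ^ (k * n ^ 2) := by rw [pow_mul]; gcongr
  have hN₀ : k * n ^ 2 ≠ 0 := by
    intro hN₀
    rw [hN₀] at hN
    linarith [one_le_pow₀ hK₁ (n := n ^ 2)]
  calc ‖expGraphEval t P z‖
      ≤ 3 * (1 * (2 * R₂ / R₁) ^ (k * n ^ 2)) :=
        norm_le_mul_pow_of_doubling (differentiable_expGraphEval t P) hR₁ hR₁₂ hR hN h
          (hdouble P hP) hz
    _ ≤ 3 ^ (k * n ^ 2) * (2 * R₂ / R₁) ^ (k * n ^ 2) := by
        rw [one_mul]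
        gcongr
        exact le_self_pow₀ (by norm_num) hN₀
    _ = ((3 * (2 * R₂ / R₁)) ^ k) ^ n ^ 2 := by rw [← mul_pow, pow_mul]

end ExponentialGraph

/-- Boundedness of the generalized Siciak extremal function for the
family `V_n = {P(z, e^{t(z)}) : deg P ≤ n}` with exponent function `φ(n) = n²`, on
complex disks: if `P(z, e^{t(z)})` is bounded by `1` on the disk of radius `R₁` about
`z₀`, then it is bounded by `C^{n²}` on the concentric disk of radius `R₂ ≥ R₁`, where
`C = C(t, z₀, R₁, R₂) ≥ 1`. -/
theorem siciak_extremal_bounded_disk_general (t : Polynomial ℂ) (z₀ : ℂ)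
    (R₁ R₂ : ℝ) (hR₁ : 0 < R₁) (hR₁₂ : R₁ ≤ R₂) :
    ∃ C : ℝ, 1 ≤ C ∧
      ∀ n : ℕ, 1 ≤ n → ∀ P : MvPolynomial (Fin 2) ℂ, P.totalDegree ≤ n →
        (∀ z ∈ Metric.closedBall z₀ R₁,
          ‖MvPolynomial.eval ![z, Complex.exp (t.eval z)] P‖ ≤ 1) →
        ∀ z ∈ Metric.closedBall z₀ R₂,
          ‖MvPolynomial.eval ![z, Complex.exp (t.eval z)] P‖ ≤ C ^ (n ^ 2) := by
  by_cases ht : t.natDegree = 0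
  · obtain ⟨b, rfl⟩ := natDegree_eq_zero.1 ht
    obtain ⟨C, hC, hbound⟩ := exists_norm_expGraphEval_C_le_pow b z₀ hR₁ hR₁₂
    exact ⟨C, hC, fun n _ ↦ hbound n⟩
  · obtain ⟨C, hC, hbound⟩ :=
      exists_norm_expGraphEval_le_pow_of_natDegree_ne_zero ht z₀ hR₁ hR₁₂
    exact ⟨C, hC, fun n hn ↦ hbound n (Nat.one_le_iff_ne_zero.1 hn)⟩
end

section
/- There is an absolute constant A ≤ 4 with the following property: for all integers m ≥ 1 and n ≥ 0, all polynomials b₀,…,b_m ∈ ℂ[w] of degree at most n, not all identically zero, and every R > 0, the exponential polynomial F(w) = Σ_{k=0}^m b_k(w) e^{kw} has at most A·( (m+1)(n+1) + mR ) zeros (counted without multiplicity) in the closed disk {w ∈ ℂ : |w| ≤ R}. In particular, for b_k of degree at most n and m = nd this gives the bound A(d n² + d n R), up to the absolute constant, on the number of zeros in |w| ≤ R. -/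
/-!
An exponential polynomial `F` satisfies `P(D) F = 0` for a polynomial `P` of degree `N`, the total
number of coefficients, whose roots are the frequencies. So the derivatives of `F` at the origin
form a linear recurrent sequence. If the frequencies have modulus at most `Δ`, this sequence is
majorized by a solution of the recurrence with all roots equal to `Δ`, whose initial values come
from Cauchy's estimates on `|w| = R`. Summing the Taylor series gives
`max_{|w| ≤ 7R} |F| ≤ e ^ (8ΔR) * 7 ^ N * max_{|w| ≤ R} |F|`.
Jensen's inequality, centred at a point where `|F|` attains its maximum on `|w| ≤ R`, turns this
growth estimate into a bound for the number of zeros. Multiplying by `e ^ (-c w)` does not change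
the zeros, so only the distance of the frequencies from a common centre `c` matters; for the
frequencies `0, …, m` one takes `c = Δ = m / 2`.
-/

open Polynomial Module Metric Finset
open MeromorphicOn (divisor)
open scoped Nat

section Sequences

/-- The left shift on sequences, as an endomorphism. On the sequence of derivatives of a function
at a point it acts as differentiation. -/
def seqShift (R M : Type*) [Semiring R] [AddCommMonoid M] [Module R M] : End R (ℕ → M) :=
  LinearMap.funLeft R M Nat.succ

theorem seqShift_apply {R M : Type*} [Semiring R] [AddCommMonoid M] [Module R M]
    (a : ℕ → M) (q : ℕ) : seqShift R M a q = a (q + 1) :=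
  rfl

theorem seqShift_pow_apply {R M : Type*} [Semiring R] [AddCommMonoid M] [Module R M]
    (a : ℕ → M) (p q : ℕ) : (seqShift R M ^ p) a q = a (q + p) := by
  induction p generalizing q with
  | zero => rfl
  | succ p ih => rw [pow_succ', End.mul_apply, seqShift_apply, ih, add_right_comm, add_assoc]

/-- The sums over `range (n + 1)` form the solution `d` of `(seqShift - x) ^ (n + 1) d = 0` with
`((seqShift - x) ^ j d) 0 = c j`. -/
theorem sum_choose_succ_mul_pow {R : Type*} [CommSemiring R] (x : R) (c : ℕ → R) (n q : ℕ) :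
    ∑ j ∈ range (n + 1), (q + 1).choose j * x ^ (q + 1 - j) * c j =
      x * ∑ j ∈ range (n + 1), q.choose j * x ^ (q - j) * c j +
        ∑ j ∈ range n, q.choose j * x ^ (q - j) * c (j + 1) := by
  have pow_absorb (j : ℕ) :
      (q.choose (j + 1) : R) * x ^ (q - j) = x * (q.choose (j + 1) * x ^ (q - (j + 1))) := by
    obtain hj | hj := lt_or_ge j q
    · rw [show q - j = q - (j + 1) + 1 by lia, pow_succ]
      ring
    · simp [Nat.choose_eq_zero_of_lt (Nat.lt_succ_of_le hj)]
  rw [sum_range_succ', sum_range_succ', mul_add, mul_sum, add_right_comm, ← sum_add_distrib]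
  congr 1
  · refine sum_congr rfl fun j _ ↦ ?_
    rw [Nat.choose_succ_succ, Nat.add_sub_add_right]
    push_cast
    rw [add_mul, pow_absorb]
    ring
  · simp [pow_succ', mul_assoc]

variable {𝕜 E : Type*} [NormedField 𝕜] [SeminormedAddCommGroup E] [NormedSpace 𝕜 E]

theorem norm_apply_le_of_norm_succ_sub_smul_le {a : ℕ → E} {ω : 𝕜} {Δ : ℝ} (hω : ‖ω‖ ≤ Δ)
    {c : ℕ → ℝ} {n : ℕ} (ha₀ : ‖a 0‖ ≤ c 0)
    (ha : ∀ q, ‖a (q + 1) - ω • a q‖ ≤ ∑ j ∈ range n, q.choose j * Δ ^ (q - j) * c (j + 1))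
    (q : ℕ) : ‖a q‖ ≤ ∑ j ∈ range (n + 1), q.choose j * Δ ^ (q - j) * c j := by
  induction q with
  | zero => simpa [sum_range_succ'] using ha₀
  | succ q ih =>
    rw [sum_choose_succ_mul_pow]
    calc ‖a (q + 1)‖ ≤ ‖ω • a q‖ + ‖a (q + 1) - ω • a q‖ := norm_le_norm_add_norm_sub' _ _
      _ ≤ _ := by
        rw [norm_smul]
        gcongr
        · exact (norm_nonneg _).trans hω
        · exact ha q

/-- A solution of a linear recurrence whose characteristic roots lie in the disc of radius `Δ` is
majorized by a solution of the recurrence with all roots equal to `Δ`. Splitting off a root `ω`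
replaces `a q` by `a (q + 1) - ω • a q`, hence the bound `d q` on the initial values by
`d (q + 1) + Δ * d q`: this is the origin of the powers of `seqShift + Δ`. -/
theorem norm_apply_le_of_aeval_prod_seqShift_eq_zero {Δ : ℝ} {s : Multiset 𝕜}
    (hs : ∀ ω ∈ s, ‖ω‖ ≤ Δ) {a : ℕ → E}
    (ha : aeval (seqShift 𝕜 E) (s.map fun ω ↦ X - C ω).prod a = 0)
    {d : ℕ → ℝ} (had : ∀ p < s.card, ‖a p‖ ≤ d p) (q : ℕ) :
    ‖a q‖ ≤ ∑ j ∈ range s.card, q.choose j * Δ ^ (q - j) *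
      ((seqShift ℝ ℝ + algebraMap ℝ _ Δ) ^ j) d 0 := by
  induction s using Multiset.induction_on generalizing a d q with
  | empty =>
    obtain rfl : a = 0 := by simpa using ha
    simp
  | cons ω s ih =>
    have hω : ‖ω‖ ≤ Δ := hs ω (Multiset.mem_cons_self ω s)
    rw [Multiset.map_cons, Multiset.prod_cons, mul_comm, map_mul, End.mul_apply] at ha
    rw [Multiset.card_cons] at had ⊢
    refine norm_apply_le_of_norm_succ_sub_smul_le hω (by simpa using had 0) (fun p ↦ ?_) q
    have hstep : aeval (seqShift 𝕜 E) (X - C ω) a = fun p ↦ a (p + 1) - ω • a p := by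
      ext p
      simp [seqShift_apply]
    rw [hstep] at ha
    refine ih (fun μ hμ ↦ hs μ (Multiset.mem_cons_of_mem hμ)) ha
      (d := (seqShift ℝ ℝ + algebraMap ℝ _ Δ) d) (fun p hp ↦ ?_) p
    calc ‖a (p + 1) - ω • a p‖ ≤ ‖a (p + 1)‖ + ‖ω • a p‖ := norm_sub_le _ _
      _ ≤ d (p + 1) + Δ * d p := by
        rw [norm_smul]
        gcongr
        · exact had _ (by lia)
        · exact (norm_nonneg _).trans hω
        · exact had _ (by lia)

theorem seqShift_add_pow_apply_zero {R : Type*} [CommSemiring R] (x : R) (d : ℕ → R) (j : ℕ) :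
    ((seqShift R R + algebraMap R _ x) ^ j) d 0 =
      ∑ pq ∈ antidiagonal j, j.choose pq.1 * (d pq.1 * x ^ pq.2) := by
  have hcomm : Commute (seqShift R R) (algebraMap R _ x) := (Algebra.commutes x _).symm
  rw [hcomm.add_pow', LinearMap.sum_apply, Finset.sum_apply]
  refine sum_congr rfl fun pq _ ↦ ?_
  rw [← map_pow, LinearMap.smul_apply, End.mul_apply, Module.algebraMap_end_apply, map_smul]
  simp [seqShift_pow_apply, mul_comm]

theorem seqShift_add_pow_factorial_div_pow_le {Δ M R : ℝ} (hΔ : 0 ≤ Δ) (hM : 0 ≤ M) (hR : 0 < R)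
    (j : ℕ) :
    ((seqShift ℝ ℝ + algebraMap ℝ _ Δ) ^ j) (fun p ↦ p ! * M / R ^ p) 0 ≤
      j ! / R ^ j * (M * Real.exp (Δ * R)) := by
  calc _ = ∑ pq ∈ antidiagonal j, j ! / R ^ j * (M * ((Δ * R) ^ pq.2 / pq.2 !)) := by
        rw [seqShift_add_pow_apply_zero]
        refine sum_congr rfl fun pq hpq ↦ ?_
        obtain ⟨p, q⟩ := pq
        obtain rfl : p + q = j := mem_antidiagonal.1 hpq
        simp only
        rw [Nat.cast_add_choose]
        field_simp
        ring
    _ = j ! / R ^ j * (M * ∑ q ∈ range (j + 1), (Δ * R) ^ q / q !) := by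
        rw [← mul_sum, ← mul_sum, ← Nat.sum_antidiagonal_swap,
          Nat.sum_antidiagonal_eq_sum_range_succ_mk]
        rfl
    _ ≤ j ! / R ^ j * (M * Real.exp (Δ * R)) := by
        gcongr
        exact Real.sum_le_exp_of_nonneg (by positivity) _

theorem norm_apply_le_of_aeval_seqShift_eq_zero {P : 𝕜[X]} (hP : P.Splits) (hP₀ : P ≠ 0) {Δ : ℝ}
    (hΔ : ∀ ω ∈ P.roots, ‖ω‖ ≤ Δ) {a : ℕ → E} (ha : aeval (seqShift 𝕜 E) P a = 0)
    {d : ℕ → ℝ} (had : ∀ p < P.natDegree, ‖a p‖ ≤ d p) (q : ℕ) :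
    ‖a q‖ ≤ ∑ j ∈ range P.natDegree, q.choose j * Δ ^ (q - j) *
      ((seqShift ℝ ℝ + algebraMap ℝ _ Δ) ^ j) d 0 := by
  rw [hP.natDegree_eq_card_roots] at had ⊢
  refine norm_apply_le_of_aeval_prod_seqShift_eq_zero hΔ ?_ had q
  rw [hP.eq_prod_roots, map_mul, aeval_C, End.mul_apply, Module.algebraMap_end_apply] at ha
  exact (smul_eq_zero_iff_right (leadingCoeff_ne_zero.2 hP₀)).1 ha

end Sequences

section Growth

theorem hasSum_choose_mul_pow (Δ x : ℝ) (j : ℕ) :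
    HasSum (fun q : ℕ ↦ x ^ q / q ! * (q.choose j * Δ ^ (q - j)))
      (x ^ j / j ! * Real.exp (Δ * x)) := by
  rw [← (add_left_injective j).hasSum_iff]
  · convert! (Real.exp_eq_exp_ℝ ▸ NormedSpace.expSeries_div_hasSum_exp (Δ * x)).mul_left
      (x ^ j / (j ! : ℝ)) using 2 with p
    rw [Function.comp_apply, Nat.add_sub_cancel, add_comm p j, Nat.cast_add_choose]
    field_simp
    ring
  · intro q hq
    have hqj : q < j := not_le.1 fun h ↦ hq ⟨q - j, Nat.sub_add_cancel h⟩
    simp [Nat.choose_eq_zero_of_lt hqj]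

/-- The sequence of derivatives of `f` at the origin. -/
noncomputable def taylorJet (f : ℂ → ℂ) (q : ℕ) : ℂ :=
  iteratedDeriv q f 0

variable {f : ℂ → ℂ} {P : ℂ[X]} {Δ R M : ℝ}

theorem hasSum_taylorJet (hf : Differentiable ℂ f) (z : ℂ) :
    HasSum (fun q ↦ z ^ q / q ! * taylorJet f q) (f z) := by
  convert! Complex.hasSum_taylorSeries_of_entire hf 0 z using 2 with q
  rw [sub_zero, smul_eq_mul, smul_eq_mul, taylorJet, div_eq_mul_inv, mul_comm (z ^ q), mul_assoc]

theorem eq_zero_of_taylorJet_eq_zero (hf : Differentiable ℂ f) (h : taylorJet f = 0) : f = 0 := by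
  ext z
  simpa [h] using (hasSum_taylorJet hf z).tsum_eq.symm

theorem norm_le_of_norm_taylorJet_le (hf : Differentiable ℂ f) {n : ℕ} {B : ℕ → ℝ}
    (hjet : ∀ q, ‖taylorJet f q‖ ≤ ∑ j ∈ range n, q.choose j * Δ ^ (q - j) * B j) (z : ℂ) :
    ‖f z‖ ≤ ∑ j ∈ range n, ‖z‖ ^ j / j ! * Real.exp (Δ * ‖z‖) * B j := by
  have hmajorant : HasSum
      (fun q : ℕ ↦ ∑ j ∈ range n, ‖z‖ ^ q / q ! * (q.choose j * Δ ^ (q - j)) * B j)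
      (∑ j ∈ range n, ‖z‖ ^ j / j ! * Real.exp (Δ * ‖z‖) * B j) :=
    hasSum_sum fun j _ ↦ (hasSum_choose_mul_pow Δ ‖z‖ j).mul_right _
  rw [← (hasSum_taylorJet hf z).tsum_eq]
  refine tsum_of_norm_bounded hmajorant fun q ↦ ?_
  simp_rw [mul_assoc (_ / _ : ℝ), ← mul_sum]
  rw [norm_mul, norm_div, norm_pow, Complex.norm_natCast]
  gcongr
  exact hjet q

theorem norm_le_of_aeval_seqShift_taylorJet_eq_zero (hf : Differentiable ℂ f) (hP : P ≠ 0)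
    (hΔ : ∀ ω ∈ P.roots, ‖ω‖ ≤ Δ) (hΔ₀ : 0 ≤ Δ)
    (hPf : aeval (seqShift ℂ ℂ) P (taylorJet f) = 0) (hR : 0 < R)
    (hM : ∀ w ∈ sphere (0 : ℂ) R, ‖f w‖ ≤ M) (z : ℂ) :
    ‖f z‖ ≤ Real.exp (Δ * (R + ‖z‖)) * M * ∑ j ∈ range P.natDegree, (‖z‖ / R) ^ j := by
  have hM₀ : 0 ≤ M := (norm_nonneg (f R)).trans (hM R (by simp [hR.le]))
  have hjet (q : ℕ) : ‖taylorJet f q‖ ≤ ∑ j ∈ range P.natDegree,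
      q.choose j * Δ ^ (q - j) * (j ! / R ^ j * (M * Real.exp (Δ * R))) := by
    refine (norm_apply_le_of_aeval_seqShift_eq_zero (IsAlgClosed.splits P) hP hΔ hPf
      (fun p _ ↦ Complex.norm_iteratedDeriv_le_of_forall_mem_sphere_norm_le p hR
        hf.diffContOnCl hM) q).trans ?_
    gcongr with j
    exact seqShift_add_pow_factorial_div_pow_le hΔ₀ hM₀ hR j
  refine (norm_le_of_norm_taylorJet_le hf hjet z).trans_eq ?_
  rw [mul_sum, mul_add, Real.exp_add]
  refine sum_congr rfl fun j _ ↦ ?_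
  rw [div_pow]
  field_simp

end Growth

section ZeroCount

theorem exists_finset_zeros_card_le_finsum_divisor {𝕜 E : Type*} [NontriviallyNormedField 𝕜]
    [NormedAddCommGroup E] [NormedSpace 𝕜 E] {f : 𝕜 → E} {U : Set 𝕜} (hU : IsCompact U)
    (hf : AnalyticOnNhd 𝕜 f U) (hord : ∀ z ∈ U, analyticOrderAt f z ≠ ⊤) :
    ∃ S : Finset 𝕜, (∀ w ∈ U, f w = 0 → w ∈ S) ∧ (S.card : ℤ) ≤ ∑ᶠ u, divisor f U u := by
  have hfin := (divisor f U).finiteSupport hU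
  refine ⟨hfin.toFinset, fun w hw hfw ↦ ?_, ?_⟩
  · have hpos : analyticOrderAt f w ≠ 0 := analyticOrderAt_ne_zero.2 ⟨hf w hw, hfw⟩
    obtain ⟨k, hk⟩ := ENat.ne_top_iff_exists.1 (hord w hw)
    rw [hfin.mem_toFinset, Function.mem_support,
      MeromorphicOn.AnalyticOnNhd.divisor_apply hf hw, ← hk]
    rw [← hk] at hpos
    simpa using hpos
  · rw [finsum_eq_sum_of_support_toFinset_subset _ hfin subset_rfl, card_eq_sum_ones,
      Nat.cast_sum]
    refine sum_le_sum fun w hw ↦ ?_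
    have hne : divisor f U w ≠ 0 := hfin.mem_toFinset.1 hw
    have hnonneg : 0 ≤ divisor f U w := MeromorphicOn.AnalyticOnNhd.divisor_nonneg hf w
    push_cast
    lia

theorem exists_finset_zeros_card_le_log_div_log {f : ℂ → ℂ} {c z₀ : ℂ} {r ρ K : ℝ} (hr : 0 < r)
    (hrρ : 2 * r < ρ) (hf : AnalyticOnNhd ℂ f (closedBall c (r + ρ)))
    (hz₀ : z₀ ∈ closedBall c r) (hfz₀ : f z₀ ≠ 0)
    (hK : ∀ z ∈ closedBall c (r + ρ), ‖f z‖ ≤ K * ‖f z₀‖) :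
    ∃ S : Finset ℂ, (∀ w ∈ closedBall c r, f w = 0 → w ∈ S) ∧
      S.card ≤ Real.log K / Real.log (ρ / (2 * r)) := by
  set g : ℂ → ℂ := fun z ↦ (f z₀)⁻¹ * f z with hg_def
  have hball : closedBall z₀ ρ ⊆ closedBall c (r + ρ) :=
    closedBall_subset_closedBall' (by linarith [mem_closedBall.1 hz₀])
  have hg : AnalyticOnNhd ℂ g (closedBall z₀ ρ) := analyticOnNhd_const.mul (hf.mono hball)
  have hgz₀ : g z₀ = 1 := inv_mul_cancel₀ hfz₀
  have hgK : ∀ z ∈ closedBall z₀ ρ, ‖g z‖ ≤ K := fun z hz ↦ by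
    rw [norm_mul, norm_inv, inv_mul_le_iff₀ (norm_pos_iff.2 hfz₀), mul_comm]
    exact hK z (hball hz)
  have hK₁ : 1 ≤ K := by simpa [hgz₀] using hgK z₀ (mem_closedBall_self (by linarith))
  have hg' := hg.mono (closedBall_subset_closedBall hrρ.le)
  have hord : ∀ z ∈ closedBall z₀ (2 * r), analyticOrderAt g z ≠ ⊤ := fun z hz ↦ by
    have hz₀' : z₀ ∈ closedBall z₀ (2 * r) := mem_closedBall_self (by linarith)
    refine hg'.analyticOrderAt_ne_top_of_isPreconnected (convex_closedBall _ _).isPreconnected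
      hz₀' hz ?_
    simp [(hg' z₀ hz₀').analyticOrderAt_eq_zero.2 (hgz₀ ▸ one_ne_zero)]
  obtain ⟨S, hS, hcard⟩ :=
    exists_finset_zeros_card_le_finsum_divisor (isCompact_closedBall z₀ (2 * r)) hg' hord
  refine ⟨S, fun w hw hfw ↦ hS w ?_ (by simp [hg_def, hfw]), ?_⟩
  · rw [mem_closedBall] at hw hz₀ ⊢
    linarith [dist_triangle_right w z₀ c]
  · have hr' : |2 * r| = 2 * r := abs_of_pos (by linarith)
    have hρ' : |ρ| = ρ := abs_of_pos (by linarith)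
    have hjensen := AnalyticOnNhd.sum_divisor_le (f := g) (c := z₀) (r := 2 * r) (R := ρ)
      (by rw [hr']; linarith) (by rwa [hr', hρ']) hK₁ (by rwa [hρ']) (hgz₀ ▸ one_ne_zero)
      (fun z hz ↦ hgK z (sphere_subset_closedBall (hρ' ▸ hz)))
    rw [hr', hgz₀, norm_one, div_one] at hjensen
    exact (Int.cast_le.2 hcard).trans hjensen

/-- The constants come from applying Jensen's inequality between the radii `2 * R` and `6 * R`,
whose ratio is `3`, together with `e ≤ 3` and `7 ≤ 3 ^ 2`. -/
theorem exists_finset_zeros_card_le_of_aeval_seqShift_taylorJet_eq_zero {f : ℂ → ℂ}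
    (hf : Differentiable ℂ f) (hf₀ : f ≠ 0) {P : ℂ[X]} (hP : P ≠ 0) {Δ R : ℝ}
    (hΔ : ∀ ω ∈ P.roots, ‖ω‖ ≤ Δ) (hΔ₀ : 0 ≤ Δ)
    (hPf : aeval (seqShift ℂ ℂ) P (taylorJet f) = 0) (hR : 0 < R) :
    ∃ S : Finset ℂ, (∀ w ∈ closedBall (0 : ℂ) R, f w = 0 → w ∈ S) ∧
      (S.card : ℝ) ≤ 2 * P.natDegree + 8 * Δ * R := by
  obtain ⟨z₀, hz₀, hmax⟩ := (isCompact_closedBall (0 : ℂ) R).exists_isMaxOn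
    ⟨0, mem_closedBall_self hR.le⟩ hf.continuous.norm.continuousOn
  have hgrowth := norm_le_of_aeval_seqShift_taylorJet_eq_zero hf hP hΔ hΔ₀ hPf hR
    fun w hw ↦ hmax (sphere_subset_closedBall hw)
  have hfz₀ : f z₀ ≠ 0 := fun h ↦ hf₀ <| funext fun z ↦ by simpa [h] using hgrowth z
  have hK : ∀ z ∈ closedBall (0 : ℂ) (R + 6 * R),
      ‖f z‖ ≤ Real.exp (8 * Δ * R) * 7 ^ P.natDegree * ‖f z₀‖ := fun z hz ↦ by
    have hz₇ : ‖z‖ ≤ 7 * R := by linarith [mem_closedBall_zero_iff.1 hz]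
    calc ‖f z‖ ≤ Real.exp (Δ * (R + ‖z‖)) * ‖f z₀‖ *
          ∑ j ∈ range P.natDegree, (‖z‖ / R) ^ j := hgrowth z
      _ ≤ Real.exp (Δ * (R + 7 * R)) * ‖f z₀‖ * ∑ j ∈ range P.natDegree, 7 ^ j := by
        gcongr
        rwa [div_le_iff₀ hR]
      _ ≤ Real.exp (Δ * (R + 7 * R)) * ‖f z₀‖ * 7 ^ P.natDegree := by
        gcongr
        exact_mod_cast (Nat.geomSum_lt (m := 7) (by norm_num) fun j ↦ mem_range.1).le
      _ = Real.exp (8 * Δ * R) * 7 ^ P.natDegree * ‖f z₀‖ := by ring_nf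
  obtain ⟨S, hS, hcard⟩ := exists_finset_zeros_card_le_log_div_log hR (by linarith)
    (fun z _ ↦ hf.analyticAt z) hz₀ hfz₀ hK
  refine ⟨S, hS, hcard.trans ?_⟩
  have hlog3 : 1 ≤ Real.log 3 := by linarith [Real.log_three_gt_d9]
  have hlog7 : Real.log 7 ≤ 2 * Real.log 3 := by
    rw [← Nat.cast_ofNat (R := ℝ) (n := 2), ← Real.log_pow]
    exact Real.log_le_log (by norm_num) (by norm_num)
  rw [show 6 * R / (2 * R) = 3 by field_simp; norm_num, div_le_iff₀ (by linarith),
    Real.log_mul (by positivity) (by positivity), Real.log_exp, Real.log_pow]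
  have hΔR : 8 * Δ * R ≤ 8 * Δ * R * Real.log 3 := le_mul_of_one_le_right (by positivity) hlog3
  have hdeg : P.natDegree * Real.log 7 ≤ P.natDegree * (2 * Real.log 3) := by gcongr
  linarith

end ZeroCount

section ExponentialPolynomials

theorem differentiable_eval_mul_cexp (p : ℂ[X]) (μ : ℂ) :
    Differentiable ℂ fun z ↦ p.eval z * Complex.exp (μ * z) := by
  fun_prop

theorem seqShift_sub_taylorJet_eval_mul_cexp (p : ℂ[X]) (μ : ℂ) :
    (seqShift ℂ ℂ - μ • 1) (taylorJet fun z ↦ p.eval z * Complex.exp (μ * z)) =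
      taylorJet fun z ↦ (derivative p).eval z * Complex.exp (μ * z) := by
  have hderiv : deriv (fun z ↦ p.eval z * Complex.exp (μ * z)) = fun z ↦
      (derivative p).eval z * Complex.exp (μ * z) + μ * (p.eval z * Complex.exp (μ * z)) := by
    ext z
    refine ((p.hasDerivAt z).mul ((hasDerivAt_id z).const_mul μ).cexp).deriv.trans ?_
    simp only [id]
    ring
  have hcontDiff (q : ℂ[X]) {n : ℕ} :
      ContDiffAt ℂ n (fun z ↦ q.eval z * Complex.exp (μ * z)) 0 :=
    (differentiable_eval_mul_cexp q μ).contDiff.contDiffAt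
  ext q
  simp only [LinearMap.sub_apply, LinearMap.smul_apply, End.one_apply, Pi.sub_apply, Pi.smul_apply,
    smul_eq_mul, seqShift_apply, taylorJet]
  rw [iteratedDeriv_succ', hderiv, iteratedDeriv_fun_add (hcontDiff _)
    (contDiffAt_const.mul (hcontDiff p)), iteratedDeriv_const_mul_field, add_sub_cancel_right]

theorem taylorJet_eval_mul_cexp_mem_genEigenspace (p : ℂ[X]) (μ : ℂ) :
    (taylorJet fun z ↦ p.eval z * Complex.exp (μ * z)) ∈
      (seqShift ℂ ℂ).genEigenspace μ (p.natDegree + 1 : ℕ) := by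
  have hiter (n : ℕ) : ((seqShift ℂ ℂ - μ • 1) ^ n)
      (taylorJet fun z ↦ p.eval z * Complex.exp (μ * z)) =
        taylorJet fun z ↦ (derivative^[n] p).eval z * Complex.exp (μ * z) := by
    induction n with
    | zero => rfl
    | succ n ih =>
      rw [pow_succ', End.mul_apply, ih, seqShift_sub_taylorJet_eval_mul_cexp,
        Function.iterate_succ_apply']
  rw [End.mem_genEigenspace_nat, LinearMap.mem_ker, hiter,
    iterate_derivative_eq_zero (Nat.lt_succ_self _)]
  ext q
  simp [taylorJet]

variable {ι : Type*}

/-- The exponential polynomial `∑ k ∈ s, b k * exp (ω k * z)` with frequencies `ω k` and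
polynomial coefficients `b k`. -/
noncomputable def expPoly (s : Finset ι) (ω : ι → ℂ) (b : ι → ℂ[X]) (z : ℂ) : ℂ :=
  ∑ k ∈ s, (b k).eval z * Complex.exp (ω k * z)

theorem differentiable_expPoly (s : Finset ι) (ω : ι → ℂ) (b : ι → ℂ[X]) :
    Differentiable ℂ (expPoly s ω b) := by
  unfold expPoly
  fun_prop

theorem taylorJet_expPoly (s : Finset ι) (ω : ι → ℂ) (b : ι → ℂ[X]) :
    taylorJet (expPoly s ω b) =
      ∑ k ∈ s, taylorJet fun z ↦ (b k).eval z * Complex.exp (ω k * z) := by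
  ext q
  rw [Finset.sum_apply]
  exact iteratedDeriv_fun_sum fun k _ ↦
    (differentiable_eval_mul_cexp (b k) (ω k)).contDiff.contDiffAt

theorem expPoly_sub_const (s : Finset ι) (ω : ι → ℂ) (b : ι → ℂ[X]) (c z : ℂ) :
    expPoly s (fun k ↦ ω k - c) b z = Complex.exp (-(c * z)) * expPoly s ω b z := by
  rw [expPoly, expPoly, mul_sum]
  refine sum_congr rfl fun k _ ↦ ?_
  rw [mul_left_comm, ← Complex.exp_add]
  ring_nf

/-- The characteristic polynomial of a constant-coefficient differential equation satisfied by
every exponential polynomial with frequencies `ω k` and coefficients of the degrees of `b k`. -/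
noncomputable def charPoly (s : Finset ι) (ω : ι → ℂ) (b : ι → ℂ[X]) : ℂ[X] :=
  ∏ k ∈ s, (X - C (ω k)) ^ ((b k).natDegree + 1)

theorem charPoly_monic (s : Finset ι) (ω : ι → ℂ) (b : ι → ℂ[X]) : (charPoly s ω b).Monic :=
  monic_prod_of_monic _ _ fun k _ ↦ (monic_X_sub_C (ω k)).pow _

theorem natDegree_charPoly (s : Finset ι) (ω : ι → ℂ) (b : ι → ℂ[X]) :
    (charPoly s ω b).natDegree = ∑ k ∈ s, ((b k).natDegree + 1) := by
  rw [charPoly, natDegree_prod_of_monic _ _ fun k _ ↦ (monic_X_sub_C (ω k)).pow _]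
  simp

theorem exists_eq_of_mem_roots_charPoly {s : Finset ι} {ω : ι → ℂ} {b : ι → ℂ[X]} {μ : ℂ}
    (hμ : μ ∈ (charPoly s ω b).roots) : ∃ k ∈ s, ω k = μ := by
  have hroot := isRoot_of_mem_roots hμ
  rw [IsRoot, charPoly, eval_prod, prod_eq_zero_iff] at hroot
  obtain ⟨k, hk, hkμ⟩ := hroot
  exact ⟨k, hk, (by simpa [sub_eq_zero] using hkμ : μ = ω k).symm⟩

theorem aeval_charPoly_taylorJet_expPoly (s : Finset ι) (ω : ι → ℂ) (b : ι → ℂ[X]) :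
    aeval (seqShift ℂ ℂ) (charPoly s ω b) (taylorJet (expPoly s ω b)) = 0 := by
  rw [taylorJet_expPoly, map_sum]
  refine sum_eq_zero fun k hk ↦ ?_
  obtain ⟨Q, hQ⟩ : (X - C (ω k)) ^ ((b k).natDegree + 1) ∣ charPoly s ω b := dvd_prod_of_mem _ hk
  have hker := taylorJet_eval_mul_cexp_mem_genEigenspace (b k) (ω k)
  rw [End.mem_genEigenspace_nat, LinearMap.mem_ker, ← Algebra.algebraMap_eq_smul_one] at hker
  rw [hQ, mul_comm, map_mul, End.mul_apply, map_pow, map_sub, aeval_X, aeval_C, hker, map_zero]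

theorem eq_zero_of_expPoly_eq_zero {s : Finset ι} {ω : ι → ℂ} (hω : Set.InjOn ω s)
    {b : ι → ℂ[X]} (h : expPoly s ω b = 0) {k : ι} (hk : k ∈ s) : b k = 0 := by
  classical
  set v : ι → ℕ → ℂ := fun i ↦ taylorJet fun z ↦ (b i).eval z * Complex.exp (ω i * z)
  have hv (i : ι) : v i ∈ (seqShift ℂ ℂ).maxGenEigenspace (ω i) :=
    End.genEigenspace_le_maximal _ _ _ (taylorJet_eval_mul_cexp_mem_genEigenspace (b i) (ω i))
  have hsum : v k + ∑ i ∈ s.erase k, v i = 0 := by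
    rw [add_sum_erase s v hk, ← taylorJet_expPoly, h]
    ext q
    simp [taylorJet]
  have hothers : v k ∈ ⨆ μ ≠ ω k, (seqShift ℂ ℂ).maxGenEigenspace μ := by
    rw [eq_neg_of_add_eq_zero_left hsum]
    refine Submodule.neg_mem _ (Submodule.sum_mem _ fun i hi ↦ ?_)
    obtain ⟨hik, his⟩ := mem_erase.1 hi
    exact Submodule.mem_iSup_of_mem (ω i) (Submodule.mem_iSup_of_mem (hω.ne his hk hik) (hv i))
  have hvk : v k = 0 := Submodule.disjoint_def.1
    ((seqShift ℂ ℂ).independent_maxGenEigenspace (ω k)) _ (hv k) hothers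
  have hterm := eq_zero_of_taylorJet_eq_zero (differentiable_eval_mul_cexp (b k) (ω k)) hvk
  refine Polynomial.funext fun z ↦ ?_
  simpa [Complex.exp_ne_zero] using congrFun hterm z

end ExponentialPolynomials

theorem tijdeman_zero_count_general {ι : Type*} {s : Finset ι} {ω : ι → ℂ} (hω : Set.InjOn ω s)
    {c : ℂ} {Δ : ℝ} (hΔ : ∀ k ∈ s, ‖ω k - c‖ ≤ Δ) {b : ι → ℂ[X]} (hb : ∃ k ∈ s, b k ≠ 0)
    {R : ℝ} (hR : 0 < R) :
    ∃ S : Finset ℂ, (∀ w ∈ closedBall (0 : ℂ) R, expPoly s ω b w = 0 → w ∈ S) ∧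
      (S.card : ℝ) ≤ 2 * ∑ k ∈ s, ((b k).natDegree + 1 : ℝ) + 8 * Δ * R := by
  obtain ⟨k, hk, hbk⟩ := hb
  have hω' : Set.InjOn (fun i ↦ ω i - c) s := fun i hi j hj h ↦ hω hi hj (sub_left_injective h)
  obtain ⟨S, hS, hcard⟩ := exists_finset_zeros_card_le_of_aeval_seqShift_taylorJet_eq_zero
    (differentiable_expPoly s (fun i ↦ ω i - c) b)
    (fun h ↦ hbk (eq_zero_of_expPoly_eq_zero hω' h hk)) (charPoly_monic _ _ _).ne_zero
    (fun μ hμ ↦ by obtain ⟨i, hi, rfl⟩ := exists_eq_of_mem_roots_charPoly hμ; exact hΔ i hi)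
    ((norm_nonneg _).trans (hΔ k hk)) (aeval_charPoly_taylorJet_expPoly _ _ _) hR
  refine ⟨S, fun w hw hFw ↦ hS w hw ?_, ?_⟩
  · rw [expPoly_sub_const, hFw, mul_zero]
  · rw [natDegree_charPoly] at hcard
    exact_mod_cast hcard

theorem norm_natCast_sub_half_le {k m : ℕ} (hkm : k ≤ m) : ‖(k : ℂ) - m / 2‖ ≤ (m / 2 : ℝ) := by
  have hcast : (k : ℂ) - m / 2 = ((k - m / 2 : ℝ) : ℂ) := by push_cast; rfl
  have hkm' : (k : ℝ) ≤ m := Nat.cast_le.2 hkm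
  rw [hcast, Complex.norm_real, Real.norm_eq_abs, abs_le]
  constructor <;> linarith [k.cast_nonneg (α := ℝ)]

/-- (Tijdeman's zero-counting estimate, as used in Baker's Lemma 1.)
There is an absolute constant `A ≤ 4` such that every exponential polynomial
`F(w) = Σ_{k=0}^m b_k(w) e^{kw}` with `m ≥ 1`, polynomial coefficients `b_k` of degree
at most `n`, not all zero, has at most `A((m+1)(n+1) + mR)` zeros (without multiplicity)
in the closed disk `|w| ≤ R`. -/
theorem tijdeman_zero_count :
    ∃ A : ℝ, 0 < A ∧ A ≤ 4 ∧
      ∀ m n : ℕ, 1 ≤ m →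
      ∀ b : ℕ → Polynomial ℂ, (∀ k ≤ m, (b k).natDegree ≤ n) →
        (∃ k ≤ m, b k ≠ 0) →
      ∀ R : ℝ, 0 < R →
        ∃ S : Finset ℂ,
          (∀ w ∈ Metric.closedBall (0 : ℂ) R,
            ∑ k ∈ Finset.range (m + 1), (b k).eval w * Complex.exp (k * w) = 0 →
              w ∈ S) ∧
          (S.card : ℝ) ≤ A * (((m : ℝ) + 1) * ((n : ℝ) + 1) + (m : ℝ) * R) := by
  refine ⟨4, by norm_num, le_rfl, fun m n _ b hdeg ⟨k, hk, hbk⟩ R hR ↦ ?_⟩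
  obtain ⟨S, hS, hcard⟩ := tijdeman_zero_count_general (s := range (m + 1)) (ω := Nat.cast)
    Nat.cast_injective.injOn (fun i hi ↦ norm_natCast_sub_half_le (mem_range_succ_iff.1 hi))
    ⟨k, mem_range_succ_iff.2 hk, hbk⟩ hR
  refine ⟨S, hS, hcard.trans ?_⟩
  have hsum : ∑ i ∈ range (m + 1), ((b i).natDegree + 1 : ℝ) ≤ (m + 1) * (n + 1) := by
    refine (sum_le_card_nsmul _ _ (n + 1 : ℝ) fun i hi ↦ ?_).trans_eq ?_
    · exact_mod_cast Nat.succ_le_succ (hdeg i (mem_range_succ_iff.1 hi))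
    · rw [card_range, nsmul_eq_mul, Nat.cast_succ]
  have hpos : (0 : ℝ) ≤ (m + 1) * (n + 1) := by positivity
  linarith
end
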